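/- arXiv:2401.14001 — 9 statements merged into one kernel-verified Lean document; each statement's English description precedes it below -/
import Mathlib

section
/- Let L be a multiplicative lattice and H a wire of L. Then the map r : Set H → Set H sending X ⊆ H to X_r = {h ∈ H | h ≤ sSup X} is a weak ideal system on the monoid H; that is, it satisfies (s1) x*h ∈ X_r for all x ∈ X and h ∈ H, (s2) X ⊆ Y ⊆ H implies X_r ⊆ Y_r, (s3) (X_r)_r = X_r, and (s4) c*X_r ⊆ (c*X)_r for all c ∈ H and X ⊆ H. -/
/-- For a subset `H` of a complete lattice `L` and `X ⊆ H`,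
`rMap H X = X_r = H ∩ [⊥, sSup X] = {h ∈ H | h ≤ sSup X}`. -/
def rMap {L : Type*} [CompleteLattice L] (H : Set L) (X : Set L) : Set L :=
  {h | h ∈ H ∧ h ≤ sSup X}

section CompleteLattice

variable {L : Type*} [CompleteLattice L] {H X Y : Set L}

theorem rMap_subset : rMap H X ⊆ H := fun _ hh => hh.1

theorem subset_rMap (hX : X ⊆ H) : X ⊆ rMap H X := fun _ hx => ⟨hX hx, le_sSup hx⟩

theorem sSup_rMap_le : sSup (rMap H X) ≤ sSup X := sSup_le fun _ hh => hh.2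

theorem rMap_subset_rMap_of_sSup_le (hXY : sSup X ≤ sSup Y) : rMap H X ⊆ rMap H Y :=
  fun _ hh => ⟨hh.1, hh.2.trans hXY⟩

theorem rMap_mono (hXY : X ⊆ Y) : rMap H X ⊆ rMap H Y :=
  rMap_subset_rMap_of_sSup_le (sSup_le_sSup hXY)

theorem rMap_rMap : rMap H (rMap H X) = rMap H X :=
  (rMap_subset_rMap_of_sSup_le sSup_rMap_le).antisymm (subset_rMap rMap_subset)

theorem mul_mem_rMap_of_le_one [MulOneClass L] [MulLeftMono L] {x h : L}
    (hxh : x * h ∈ H) (hx : x ∈ X) (hh : h ≤ 1) : x * h ∈ rMap H X :=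
  ⟨hxh, (mul_le_of_le_one_right' hh).trans (le_sSup hx)⟩

end CompleteLattice

section Quantale

variable {L : Type*} [CompleteLattice L]

theorem isQuantale_of_mul_sSup_distrib [CommSemigroup L]
    (hdist : ∀ (a : L) (S : Set L), a * sSup S = ⨆ b ∈ S, a * b) : IsQuantale L where
  mul_sSup_distrib := hdist
  sSup_mul_distrib S a := by simpa only [mul_comm _ a] using hdist a S

theorem sSup_image_mul_left [Semigroup L] [IsQuantale L] (c : L) (X : Set L) :
    sSup ((fun y => c * y) '' X) = c * sSup X := by
  rw [sSup_image, mul_sSup_distrib]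

theorem image_mul_left_rMap_subset [Semigroup L] [IsQuantale L] {H X : Set L} {c : L}
    (hc : ∀ y ∈ H, c * y ∈ H) :
    (fun y => c * y) '' rMap H X ⊆ rMap H ((fun y => c * y) '' X) := by
  rintro _ ⟨y, ⟨hyH, hyX⟩, rfl⟩
  refine ⟨hc y hyH, ?_⟩
  calc c * y ≤ c * sSup X := by gcongr
    _ = sSup ((fun y => c * y) '' X) := (sSup_image_mul_left c X).symm

theorem stmt_0_general [Monoid L] [IsQuantale L] {H : Set L}
    (hHone : ∀ h ∈ H, h ≤ 1) (hHmul : ∀ x ∈ H, ∀ y ∈ H, x * y ∈ H) :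
    ∀ X : Set L, X ⊆ H →
      ((∀ x ∈ X, ∀ h ∈ H, x * h ∈ rMap H X) ∧
       (∀ Y : Set L, Y ⊆ H → X ⊆ Y → rMap H X ⊆ rMap H Y) ∧
       (rMap H (rMap H X) = rMap H X) ∧
       (∀ c ∈ H, (fun y => c * y) '' rMap H X ⊆ rMap H ((fun y => c * y) '' X))) :=
  fun _ hX =>
    ⟨fun x hx h hh => mul_mem_rMap_of_le_one (hHmul x (hX hx) h hh) hx (hHone h hh),
      fun _ _ hXY => rMap_mono hXY,
      rMap_rMap,
      fun c hc => image_mul_left_rMap_subset (hHmul c hc)⟩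

end Quantale

/-- if `H` is a wire of a multiplicative lattice `L`, then
`X ↦ X_r = {h ∈ H | h ≤ sSup X}` is a weak ideal system on `H`. -/
theorem stmt_0 {L : Type*} [CompleteLattice L] [CommMonoid L]
    (hdist : ∀ (a : L) (S : Set L), a * sSup S = ⨆ b ∈ S, a * b)
    (hone : (1 : L) = ⊤)
    (H : Set L) (hH1 : (1 : L) ∈ H) (hHbot : (⊥ : L) ∈ H)
    (hHmul : ∀ x ∈ H, ∀ y ∈ H, x * y ∈ H)
    (hgen : ∀ a : L, a = sSup {h | h ∈ H ∧ h ≤ a}) :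
    ∀ X : Set L, X ⊆ H →
      ((∀ x ∈ X, ∀ h ∈ H, x * h ∈ rMap H X) ∧
       (∀ Y : Set L, Y ⊆ H → X ⊆ Y → rMap H X ⊆ rMap H Y) ∧
       (rMap H (rMap H X) = rMap H X) ∧
       (∀ c ∈ H, (fun y => c * y) '' rMap H X ⊆ rMap H ((fun y => c * y) '' X))) := by
  have := isQuantale_of_mul_sSup_distrib hdist
  exact stmt_0_general (fun _ _ => hone ▸ le_top) hHmul
end

section
/- Let L be a multiplicative lattice and H a wire of L, with X_r = {h ∈ H | h ≤ sSup X} for X ⊆ H. Then the maps f(X) = sSup X (from the set of r-ideals to L) and g(y) = {h ∈ H | h ≤ y} (from L to the set of r-ideals) are mutually inverse bijections, f is monotone from inclusion to ≤, and g is monotone from ≤ to inclusion; in particular the poset of r-ideals of H ordered by inclusion is order-isomorphic to L. -/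
/-- `gMap H y = {h ∈ H | h ≤ y}`. -/
def gMap {L : Type*} [CompleteLattice L] (H : Set L) (y : L) : Set L :=
  {h | h ∈ H ∧ h ≤ y}

/-!
In a complete lattice each `gMap H y` is an `r`-ideal of `H`: its join lies below `y`, so taking
the join and then applying `gMap H` gives `gMap H y` back. As `rMap H X` is `gMap H (sSup X)`, the
`r`-ideals are exactly the sets `gMap H y`. That `H` generates the lattice means that `y` is
recovered as the join of `gMap H y`, so `sSup` and `gMap H` are mutually inverse; since both are
monotone, they form an order isomorphism.
-/

section

variable {L : Type*} [CompleteLattice L] {H A : Set L}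

theorem gMap_subset (H : Set L) (y : L) : gMap H y ⊆ H :=
  fun _ h => h.1

theorem gMap_mono (H : Set L) : Monotone (gMap H) :=
  fun _ _ hxy _ h => ⟨h.1, h.2.trans hxy⟩

theorem sSup_gMap_le (H : Set L) (y : L) : sSup (gMap H y) ≤ y :=
  sSup_le fun _ h => h.2

theorem subset_gMap_sSup (hA : A ⊆ H) : A ⊆ gMap H (sSup A) :=
  fun _ h => ⟨hA h, le_sSup h⟩

theorem gMap_sSup_gMap (H : Set L) (y : L) : gMap H (sSup (gMap H y)) = gMap H y :=
  (gMap_mono H (sSup_gMap_le H y)).antisymm (subset_gMap_sSup (gMap_subset H y))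

theorem gMap_sSup_rMap (H X : Set L) : gMap H (sSup (rMap H X)) = rMap H X :=
  gMap_sSup_gMap H (sSup X)

/-- `A` is an `r`-ideal of `H`: a set of the form `X_r` with `X ⊆ H`. -/
def IsRIdeal (H A : Set L) : Prop :=
  ∃ X : Set L, X ⊆ H ∧ A = rMap H X

theorem isRIdeal_gMap (H : Set L) (y : L) : IsRIdeal H (gMap H y) :=
  ⟨gMap H y, gMap_subset H y, (gMap_sSup_gMap H y).symm⟩

theorem IsRIdeal.gMap_sSup (hA : IsRIdeal H A) : gMap H (sSup A) = A := by
  obtain ⟨X, -, rfl⟩ := hA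
  exact gMap_sSup_rMap H X

/-- `H` is join-dense: every element of the lattice is the join of the elements of `H` below it.
This is the condition that a wire generates its lattice. -/
def IsJoinDense (H : Set L) : Prop :=
  ∀ y : L, sSup (gMap H y) = y

/-- The order isomorphism `f(A) = sSup A`, with inverse `g(y) = gMap H y`, from the `r`-ideals of
a join-dense subset, ordered by inclusion, to the lattice. -/
def IsJoinDense.rIdealOrderIso (hH : IsJoinDense H) : {A : Set L // IsRIdeal H A} ≃o L :=
  Equiv.toOrderIso
    { toFun A := sSup A.1
      invFun y := ⟨gMap H y, isRIdeal_gMap H y⟩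
      left_inv A := Subtype.ext A.2.gMap_sSup
      right_inv := hH }
    (fun _ _ hAB => sSup_le_sSup hAB) (gMap_mono H)

end

theorem stmt_1_general {L : Type*} [CompleteLattice L] {H : Set L} (hH : IsJoinDense H) :
    (∀ y : L, ∃ X : Set L, X ⊆ H ∧ gMap H y = rMap H X) ∧
    (∀ X : Set L, X ⊆ H → gMap H (sSup (rMap H X)) = rMap H X) ∧
    (∀ y : L, sSup (gMap H y) = y) ∧
    (∀ A B : Set L, A ⊆ B → sSup A ≤ sSup B) ∧
    (∀ x y : L, x ≤ y → gMap H x ⊆ gMap H y) ∧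
    Nonempty ({A : Set L // ∃ X : Set L, X ⊆ H ∧ A = rMap H X} ≃o L) :=
  ⟨isRIdeal_gMap H, fun X _ => gMap_sSup_rMap H X, hH, fun _ _ => sSup_le_sSup,
    fun _ _ hxy => gMap_mono H hxy, ⟨hH.rIdealOrderIso⟩⟩

/-- for a wire `H` of a multiplicative lattice `L`, the maps
`f(X) = sSup X` and `g(y) = {h ∈ H | h ≤ y}` are mutually inverse monotone
bijections between the `r`-ideals of `H` and `L`; in particular the poset of
`r`-ideals ordered by inclusion is order-isomorphic to `L`. -/
theorem stmt_1 {L : Type*} [CompleteLattice L] [CommMonoid L]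
    (hdist : ∀ (a : L) (S : Set L), a * sSup S = ⨆ b ∈ S, a * b)
    (hone : (1 : L) = ⊤)
    (H : Set L) (hH1 : (1 : L) ∈ H) (hHbot : (⊥ : L) ∈ H)
    (hHmul : ∀ x ∈ H, ∀ y ∈ H, x * y ∈ H)
    (hgen : ∀ a : L, a = sSup {h | h ∈ H ∧ h ≤ a}) :
    (∀ y : L, ∃ X : Set L, X ⊆ H ∧ gMap H y = rMap H X) ∧
    (∀ X : Set L, X ⊆ H → gMap H (sSup (rMap H X)) = rMap H X) ∧
    (∀ y : L, sSup (gMap H y) = y) ∧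
    (∀ A B : Set L, A ⊆ B → sSup A ≤ sSup B) ∧
    (∀ x y : L, x ≤ y → gMap H x ⊆ gMap H y) ∧
    Nonempty ({A : Set L // ∃ X : Set L, X ⊆ H ∧ A = rMap H X} ≃o L) :=
  stmt_1_general fun y => (hgen y).symm
end

section
/- Let L be a multiplicative lattice and H a wire of L, with X_r = {h ∈ H | h ≤ sSup X} for X ⊆ H. Then for all X, Y ⊆ H one has sSup ((X*Y)_r) = (sSup X) * (sSup Y), where X*Y = {x*y | x ∈ X, y ∈ Y}; in particular the order isomorphism X ↦ sSup X from r-ideals to L is multiplicative with respect to the product (X, Y) ↦ (X*Y)_r on r-ideals. -/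
section Quantale

variable {L : Type*} [CompleteLattice L]

theorem sSup_rMap {H : Set L} (hgen : ∀ a : L, a = sSup {h | h ∈ H ∧ h ≤ a}) (X : Set L) :
    sSup (rMap H X) = sSup X :=
  (hgen (sSup X)).symm

variable [Semigroup L] [IsQuantale L]

theorem sSup_image2_mul (X Y : Set L) :
    sSup (Set.image2 (· * ·) X Y) = sSup X * sSup Y := by
  simp_rw [sSup_image2, sSup_mul_distrib (s := X), mul_sSup_distrib]

theorem stmt_2_general {H : Set L} (hgen : ∀ a : L, a = sSup {h | h ∈ H ∧ h ≤ a})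
    (X Y : Set L) : sSup (rMap H (Set.image2 (· * ·) X Y)) = sSup X * sSup Y := by
  rw [sSup_rMap hgen, sSup_image2_mul]

end Quantale

/-- for a wire `H` of a multiplicative lattice `L` and `X, Y ⊆ H`,
`sSup ((X*Y)_r) = (sSup X) * (sSup Y)`; so `X ↦ sSup X` is multiplicative with
respect to the product `(X, Y) ↦ (X*Y)_r` on `r`-ideals. -/
theorem stmt_2 {L : Type*} [CompleteLattice L] [CommMonoid L]
    (hdist : ∀ (a : L) (S : Set L), a * sSup S = ⨆ b ∈ S, a * b)
    (hone : (1 : L) = ⊤)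
    (H : Set L) (hH1 : (1 : L) ∈ H) (hHbot : (⊥ : L) ∈ H)
    (hHmul : ∀ x ∈ H, ∀ y ∈ H, x * y ∈ H)
    (hgen : ∀ a : L, a = sSup {h | h ∈ H ∧ h ≤ a}) :
    ∀ X : Set L, X ⊆ H → ∀ Y : Set L, Y ⊆ H →
      sSup (rMap H (Set.image2 (· * ·) X Y)) = sSup X * sSup Y := by
  intro X _ Y _
  have : IsQuantale L := isQuantale_of_mul_sSup_distrib hdist
  exact stmt_2_general hgen X Y
end

section
/- Let L be a multiplicative lattice and H an M-wire of L, with X_r = {h ∈ H | h ≤ sSup X} for X ⊆ H. Then r is an ideal system: for every c ∈ H and every X ⊆ H one has (c*X)_r = c*X_r, where c*X = {c*x | x ∈ X}. -/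
/-!
Multiplication by `c` preserves suprema, so `(c*X)_r` is the part of `H` below `c * sSup X`.
Condition (M) says that every element of `H` below `c * a` is `c` times an element of `H` below
`a`; taking `a = sSup X` gives the claim.
-/

theorem rMap_eq_inter_Iic {L : Type*} [CompleteLattice L] (H X : Set L) :
    rMap H X = H ∩ Set.Iic (sSup X) :=
  rfl

theorem rMap_image_sSupHom {L M : Type*} [CompleteLattice L] [CompleteLattice M]
    (f : sSupHom L M) {H : Set L} {K : Set M} (hmaps : Set.MapsTo f H K)
    (hsurj : ∀ a, Set.SurjOn f (H ∩ Set.Iic a) (K ∩ Set.Iic (f a))) (X : Set L) :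
    rMap K (f '' X) = f '' rMap H X := by
  have hmono : Monotone f := OrderHomClass.mono f
  rw [rMap_eq_inter_Iic, rMap_eq_inter_Iic, ← map_sSup]
  exact ((hsurj _).image_eq_of_mapsTo (hmaps.inter_inter hmono.mapsTo_Iic)).symm

theorem stmt_3_general {L : Type*} [CompleteLattice L] [Mul L]
    (hdist : ∀ (a : L) (S : Set L), a * sSup S = ⨆ b ∈ S, a * b) {H : Set L}
    (hHmul : ∀ x ∈ H, ∀ y ∈ H, x * y ∈ H)
    (hM : ∀ s ∈ H, ∀ t ∈ H, ∀ a : L, s ≤ t * a → ∃ u ∈ H, u ≤ a ∧ s = t * u)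
    {c : L} (hc : c ∈ H) (X : Set L) :
    rMap H ((fun y => c * y) '' X) = (fun y => c * y) '' rMap H X := by
  let mulLeft : sSupHom L L := ⟨fun y => c * y, fun S => by rw [hdist, sSup_image]⟩
  have hsurj (a : L) : Set.SurjOn mulLeft (H ∩ Set.Iic a) (H ∩ Set.Iic (mulLeft a)) := by
    rintro s ⟨hs, hsa⟩
    obtain ⟨u, hu, hua, rfl⟩ := hM s hs c hc a hsa
    exact ⟨u, ⟨hu, hua⟩, rfl⟩
  exact rMap_image_sSupHom mulLeft (hHmul c hc) hsurj X

/-- if `H` is an M-wire of a multiplicative lattice `L`, then `r`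
is an ideal system: `(c*X)_r = c*X_r` for every `c ∈ H` and `X ⊆ H`. -/
theorem stmt_3 {L : Type*} [CompleteLattice L] [CommMonoid L]
    (hdist : ∀ (a : L) (S : Set L), a * sSup S = ⨆ b ∈ S, a * b)
    (hone : (1 : L) = ⊤)
    (H : Set L) (hH1 : (1 : L) ∈ H) (hHbot : (⊥ : L) ∈ H)
    (hHmul : ∀ x ∈ H, ∀ y ∈ H, x * y ∈ H)
    (hgen : ∀ a : L, a = sSup {h | h ∈ H ∧ h ≤ a})
    (hM : ∀ s ∈ H, ∀ t ∈ H, ∀ a : L, s ≤ t * a → ∃ u ∈ H, u ≤ a ∧ s = t * u) :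
    ∀ c ∈ H, ∀ X : Set L, X ⊆ H →
      rMap H ((fun y => c * y) '' X) = (fun y => c * y) '' rMap H X :=
  fun _ hc X _ => stmt_3_general hdist hHmul hM hc X
end

section
/- Let L be a multiplicative lattice and H a wire of L, with X_r = {h ∈ H | h ≤ sSup X} for X ⊆ H. If (c*X)_r ⊆ c*X_r for every c ∈ H and every X ⊆ H (so that r is an ideal system), then H satisfies condition (M): whenever s, t ∈ H, a ∈ L and s ≤ t*a, there exists u ∈ H with u ≤ a and s = t*u. -/
section

variable {L : Type*} [CompleteLattice L] [Mul L] {H X : Set L} {c s : L}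

theorem mem_rMap_image_mul_left_iff (hc : c * sSup X = ⨆ b ∈ X, c * b) :
    s ∈ rMap H ((fun y => c * y) '' X) ↔ s ∈ H ∧ s ≤ c * sSup X := by
  rw [hc, ← sSup_image]
  exact Iff.rfl

theorem exists_mem_rMap_eq_mul_of_le_mul_sSup (hc : c * sSup X = ⨆ b ∈ X, c * b)
    (hsys : rMap H ((fun y => c * y) '' X) ⊆ (fun y => c * y) '' rMap H X)
    (hs : s ∈ H) (hle : s ≤ c * sSup X) : ∃ u ∈ rMap H X, s = c * u := by
  obtain ⟨u, hu, rfl⟩ := hsys ((mem_rMap_image_mul_left_iff hc).2 ⟨hs, hle⟩)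
  exact ⟨u, hu, rfl⟩

theorem stmt_4_general
    (hdist : ∀ c ∈ H, ∀ X ⊆ H, c * sSup X = ⨆ b ∈ X, c * b)
    (hgen : ∀ a : L, a = sSup {h | h ∈ H ∧ h ≤ a})
    (hsys : ∀ c ∈ H, ∀ X ⊆ H,
      rMap H ((fun y => c * y) '' X) ⊆ (fun y => c * y) '' rMap H X) :
    ∀ s ∈ H, ∀ t ∈ H, ∀ a : L, s ≤ t * a → ∃ u ∈ H, u ≤ a ∧ s = t * u := by
  intro s hs t ht a hsa
  let X : Set L := {h | h ∈ H ∧ h ≤ a}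
  have hXH : X ⊆ H := fun _ h => h.1
  have hX : sSup X = a := (hgen a).symm
  obtain ⟨u, ⟨huH, huX⟩, hsu⟩ :=
    exists_mem_rMap_eq_mul_of_le_mul_sSup (hdist t ht X hXH) (hsys t ht X hXH) hs
      (hsa.trans_eq (congrArg (t * ·) hX.symm))
  exact ⟨u, huH, huX.trans_eq hX, hsu⟩

end

/-- if `H` is a wire of a multiplicative lattice `L` such that
`(c*X)_r ⊆ c*X_r` for all `c ∈ H`, `X ⊆ H` (so `r` is an ideal system), then
`H` satisfies condition (M). -/
theorem stmt_4 {L : Type*} [CompleteLattice L] [CommMonoid L]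
    (hdist : ∀ (a : L) (S : Set L), a * sSup S = ⨆ b ∈ S, a * b)
    (hone : (1 : L) = ⊤)
    (H : Set L) (hH1 : (1 : L) ∈ H) (hHbot : (⊥ : L) ∈ H)
    (hHmul : ∀ x ∈ H, ∀ y ∈ H, x * y ∈ H)
    (hgen : ∀ a : L, a = sSup {h | h ∈ H ∧ h ≤ a})
    (hsys : ∀ c ∈ H, ∀ X : Set L, X ⊆ H →
      rMap H ((fun y => c * y) '' X) ⊆ (fun y => c * y) '' rMap H X) :
    ∀ s ∈ H, ∀ t ∈ H, ∀ a : L, s ≤ t * a → ∃ u ∈ H, u ≤ a ∧ s = t * u :=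
  stmt_4_general (fun c _ X _ => hdist c X) hgen hsys
end

section
/- Every multiplicative lattice L can be lifted to a weak ideal system: the map r : Set L → Set L defined by X_r = {y ∈ L | y ≤ sSup X} satisfies axioms (s1)–(s4) of a weak ideal system on the monoid L itself, its r-ideals are exactly the intervals {y | y ≤ a} for a ∈ L, and the map X ↦ sSup X is a monotone bijection from the r-ideals (ordered by inclusion) onto L with monotone inverse a ↦ {y | y ≤ a}. -/
/-!
The maps `sSup : Set L → L` and `Set.Iic : L → Set L` form a Galois insertion, and `X ↦ X_r` is its
closure operator; this gives everything that does not mention the product. Multiplication enters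
through two facts: `c * ·` preserves suprema, which is (s4), and hence is monotone, so that
`x * h ≤ x * 1 = x`, which is (s1).
-/

open Set

theorem image_Iic_sSup_subset {F α β : Type*} [CompleteLattice α] [CompleteLattice β]
    [FunLike F α β] [sSupHomClass F α β] (f : F) (X : Set α) :
    f '' Iic (sSup X) ⊆ Iic (sSup (f '' X)) := by
  rw [← map_sSup]
  exact (OrderHomClass.mono f).image_Iic_subset

/-- Left multiplication by `a` as a morphism of complete join-semilattices, for an `a` over which
arbitrary suprema distribute. Bundling it gives access to the lemmas on `sSupHomClass`. -/
def mulLeftSSupHom {L : Type*} [CompleteLattice L] [Mul L] (a : L)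
    (ha : ∀ S : Set L, a * sSup S = ⨆ b ∈ S, a * b) : sSupHom L L where
  toFun b := a * b
  map_sSup' S := by rw [ha, sSup_image]

theorem mulLeftMono_of_mul_sSup {L : Type*} [CompleteLattice L] [Mul L]
    (hdist : ∀ (a : L) (S : Set L), a * sSup S = ⨆ b ∈ S, a * b) : MulLeftMono L where
  elim a _ _ hbc := OrderHomClass.mono (mulLeftSSupHom a (hdist a)) hbc

theorem mul_mem_Iic_sSup {L : Type*} [CompleteLattice L] [MulOneClass L] [MulLeftMono L]
    (hone : (1 : L) = ⊤) {X : Set L} {x : L} (hx : x ∈ X) (h : L) : x * h ∈ Iic (sSup X) :=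
  have h_le_one : h ≤ 1 := hone ▸ le_top
  (mul_le_of_le_one_right' h_le_one).trans (le_sSup hx)

theorem stmt_7_general {L : Type*} [CompleteLattice L] [MulOneClass L]
    (hdist : ∀ (a : L) (S : Set L), a * sSup S = ⨆ b ∈ S, a * b)
    (hone : (1 : L) = ⊤) :
    (∀ X : Set L, ∀ x ∈ X, ∀ h : L, x * h ∈ {y : L | y ≤ sSup X}) ∧
    (∀ X Y : Set L, X ⊆ Y → {y : L | y ≤ sSup X} ⊆ {y : L | y ≤ sSup Y}) ∧
    (∀ X : Set L, {y : L | y ≤ sSup {z : L | z ≤ sSup X}} = {y : L | y ≤ sSup X}) ∧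
    (∀ (c : L) (X : Set L),
      (fun y => c * y) '' {y : L | y ≤ sSup X} ⊆
        {y : L | y ≤ sSup ((fun y => c * y) '' X)}) ∧
    (∀ X : Set L, ∃ a : L, {y : L | y ≤ sSup X} = {y : L | y ≤ a}) ∧
    (∀ a : L, ∃ X : Set L, {y : L | y ≤ a} = {y : L | y ≤ sSup X}) ∧
    (∀ a : L, sSup {y : L | y ≤ a} = a) ∧
    (∀ X : Set L, {y : L | y ≤ sSup {z : L | z ≤ sSup X}} = {y : L | y ≤ sSup X}) ∧
    (∀ A B : Set L, A ⊆ B → sSup A ≤ sSup B) ∧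
    (∀ a b : L, a ≤ b → {y : L | y ≤ a} ⊆ {y : L | y ≤ b}) := by
  have gi : GaloisInsertion (sSup : Set L → L) Iic := giSSupIic
  have r_idem (X : Set L) : Iic (sSup (Iic (sSup X))) = Iic (sSup X) :=
    gi.gc.u_l_u_eq_u (sSup X)
  have := mulLeftMono_of_mul_sSup hdist
  exact ⟨fun _ _ => mul_mem_Iic_sSup hone,
    fun _ _ hXY => gi.gc.monotone_u (gi.gc.monotone_l hXY),
    r_idem,
    fun c => image_Iic_sSup_subset (mulLeftSSupHom c (hdist c)),
    fun X => ⟨sSup X, rfl⟩,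
    fun a => ⟨Iic a, (gi.gc.u_l_u_eq_u a).symm⟩,
    gi.l_u_eq,
    r_idem,
    fun _ _ hAB => gi.gc.monotone_l hAB,
    fun _ _ hab => gi.gc.monotone_u hab⟩

/-- every multiplicative lattice `L` can be lifted to a weak ideal
system: `X ↦ X_r = {y | y ≤ sSup X}` satisfies (s1)–(s4) on the monoid `L`
itself, the `r`-ideals are exactly the intervals `{y | y ≤ a}`, and
`X ↦ sSup X` is a monotone bijection from the `r`-ideals onto `L` with
monotone inverse `a ↦ {y | y ≤ a}`. -/
theorem stmt_7 {L : Type*} [CompleteLattice L] [CommMonoid L]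
    (hdist : ∀ (a : L) (S : Set L), a * sSup S = ⨆ b ∈ S, a * b)
    (hone : (1 : L) = ⊤) :
    (∀ X : Set L, ∀ x ∈ X, ∀ h : L, x * h ∈ {y : L | y ≤ sSup X}) ∧
    (∀ X Y : Set L, X ⊆ Y → {y : L | y ≤ sSup X} ⊆ {y : L | y ≤ sSup Y}) ∧
    (∀ X : Set L, {y : L | y ≤ sSup {z : L | z ≤ sSup X}} = {y : L | y ≤ sSup X}) ∧
    (∀ (c : L) (X : Set L),
      (fun y => c * y) '' {y : L | y ≤ sSup X} ⊆
        {y : L | y ≤ sSup ((fun y => c * y) '' X)}) ∧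
    (∀ X : Set L, ∃ a : L, {y : L | y ≤ sSup X} = {y : L | y ≤ a}) ∧
    (∀ a : L, ∃ X : Set L, {y : L | y ≤ a} = {y : L | y ≤ sSup X}) ∧
    (∀ a : L, sSup {y : L | y ≤ a} = a) ∧
    (∀ X : Set L, {y : L | y ≤ sSup {z : L | z ≤ sSup X}} = {y : L | y ≤ sSup X}) ∧
    (∀ A B : Set L, A ⊆ B → sSup A ≤ sSup B) ∧
    (∀ a b : L, a ≤ b → {y : L | y ≤ a} ⊆ {y : L | y ≤ b}) :=
  stmt_7_general hdist hone
end

section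
/- Let K be a number field with [K : ℚ] = 2 and ring of integers 𝓞 K, and let N(a) = |Norm_ℤ(a)| ∈ ℕ denote the absolute norm. Let S be the multiplicative submonoid of ℕ generated by the image of N together with the set of inert prime numbers (primes p such that the ideal p·𝓞 K is prime). Then S generates ℕ as a lattice under gcd; in particular, for every prime number p there exist s, t ∈ S with gcd(s, t) = p. -/
open NumberField

/-!
If a prime number `p` is not inert and the degree is at most three, then some ideal `P` has norm
exactly `p`: in a factorization `(p) = P * J` into proper ideals, the norms of `P` and `J` are
`p ^ i` and `p ^ j` with `i, j ≥ 1` and `i + j ≤ 3`, so one of the exponents is `1`. In the inverse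
ideal class of `P` there is an ideal coprime to `p`; this provides `a` with norm `p * m`, `p ∤ m`,
whence `gcd (N a) (N p) = p`. Finally, the gcds of finite subsets of a submonoid of `ℕ` are
closed under multiplication, so that they exhaust `ℕ` as soon as they include all primes.
-/

section GcdClosure

open scoped Pointwise

variable {α : Type*} [CommMonoidWithZero α] [StrongNormalizedGCDMonoid α]

theorem finset_gcd_mul [DecidableEq α] (s t : Finset α) :
    (s * t).gcd id = s.gcd id * t.gcd id := by
  refine dvd_antisymm_of_normalize_eq Finset.normalize_gcd
    (by simp only [normalize_mul, Finset.normalize_gcd]) ?_ ?_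
  · have hmul : s.gcd id * t.gcd id = t.gcd fun b => s.gcd id * b := by
      rw [Finset.gcd_mul_left, Finset.normalize_gcd]; rfl
    rw [hmul]
    refine Finset.dvd_gcd fun b hb => ?_
    rw [← (Finset.gcd_mul_right' s id b).dvd_iff_dvd_right]
    exact Finset.dvd_gcd fun a ha => Finset.gcd_dvd (Finset.mul_mem_mul ha hb)
  · refine Finset.dvd_gcd fun c hc => ?_
    obtain ⟨a, ha, b, hb, rfl⟩ := Finset.mem_mul.mp hc
    exact mul_dvd_mul (Finset.gcd_dvd ha) (Finset.gcd_dvd hb)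

/-- The set of greatest common divisors of finite subsets of a multiplicative submonoid `S`: the
join-subsemilattice, for divisibility reversed, that `S` generates. It contains `0`, the gcd of
the empty set. -/
def gcdClosure (S : Submonoid α) : Submonoid α where
  carrier := {n | ∃ T : Finset α, (T : Set α) ⊆ S ∧ T.gcd id = n}
  one_mem' := ⟨{1}, by simp, by simp⟩
  mul_mem' := by
    classical
    rintro _ _ ⟨T, hT, rfl⟩ ⟨U, hU, rfl⟩
    refine ⟨T * U, ?_, finset_gcd_mul T U⟩
    rw [Finset.coe_mul]
    exact (Set.mul_subset_mul hT hU).trans S.coe_mul_self_eq.subset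

theorem mem_gcdClosure {S : Submonoid α} {n : α} :
    n ∈ gcdClosure S ↔ ∃ T : Finset α, (T : Set α) ⊆ S ∧ T.gcd id = n :=
  Iff.rfl

theorem zero_mem_gcdClosure (S : Submonoid α) : 0 ∈ gcdClosure S :=
  ⟨∅, by simp, Finset.gcd_empty⟩

theorem gcd_mem_gcdClosure {S : Submonoid α} {s t : α} (hs : s ∈ S) (ht : t ∈ S) :
    gcd s t ∈ gcdClosure S := by
  classical
  refine ⟨{s, t}, by simp [Set.insert_subset_iff, hs, ht], ?_⟩
  rw [Finset.gcd_insert, Finset.gcd_singleton]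
  exact (normalize_associated t).gcd_eq_right s

theorem gcdClosure_eq_top_of_forall_prime {S : Submonoid ℕ}
    (hprime : ∀ p : ℕ, p.Prime → p ∈ gcdClosure S) : gcdClosure S = ⊤ := by
  refine eq_top_iff.mpr fun n _ => ?_
  induction n using Nat.recOnMul with
  | zero => exact zero_mem_gcdClosure S
  | one => exact one_mem _
  | prime p hp => exact hprime p hp
  | mul a b ha hb => exact mul_mem (ha trivial) (hb trivial)

end GcdClosure

section IdealNorm

variable {R : Type*} [CommRing R] [IsDedekindDomain R]

theorem exists_isCoprime_mul_eq_span_singleton {I J : Ideal R} (hI : I ≠ ⊥) (hJ : J ≠ ⊥) :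
    ∃ (a : R) (I' : Ideal R), IsCoprime J I' ∧ I * I' = Ideal.span {a} := by
  obtain ⟨a, ha⟩ := IsDedekindDomain.exists_sup_span_eq
    (Ideal.mul_le_left : I * J ≤ I) (mul_ne_zero hI hJ)
  obtain ⟨I', hI'⟩ : I ∣ Ideal.span {a} := Ideal.dvd_iff_le.mpr (ha ▸ le_sup_right)
  refine ⟨a, I', ?_, hI'.symm⟩
  rw [hI', ← Ideal.mul_sup] at ha
  rw [Ideal.isCoprime_iff_sup_eq, ← Ideal.one_eq_top]
  exact mul_left_cancel₀ hI (ha.trans (mul_one I).symm)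

variable [Module.Free ℤ R] [Module.Finite ℤ R]

theorem coprime_absNorm_of_isCoprime_span {n : ℕ} {J : Ideal R}
    (hJ : IsCoprime (Ideal.span {(n : R)}) J) : n.Coprime J.absNorm := by
  refine Nat.coprime_of_dvd fun q hq hqn hqJ => ?_
  obtain ⟨Q, hQ, hQq, hQJ⟩ := Ideal.exists_isMaximal_dvd_of_dvd_absNorm' hq J hqJ
  have hqQ : (q : R) ∈ Q := by
    have : (q : ℤ) ∈ Q.under ℤ := hQq ▸ Ideal.mem_span_singleton_self _
    simpa only [Ideal.mem_comap, map_natCast] using this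
  have hnQ : (n : R) ∈ Q := Q.mem_of_dvd (Nat.cast_dvd_cast hqn) hqQ
  refine hQ.ne_top (top_le_iff.mp ?_)
  rw [← Ideal.isCoprime_iff_sup_eq.mp hJ]
  exact sup_le ((Ideal.span_singleton_le_iff_mem _).mpr hnQ) (Ideal.dvd_iff_le.mp hQJ)

theorem natAbs_norm_natCast (n : ℕ) :
    (Algebra.norm ℤ (n : R)).natAbs = n ^ Module.finrank ℤ R := by
  rw [← Ideal.absNorm_span_singleton, Ideal.absNorm_span_natCast]

theorem exists_gcd_natAbs_norm_eq_absNorm (I : Ideal R) :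
    ∃ a : R, Nat.gcd (Algebra.norm ℤ a).natAbs
      (Algebra.norm ℤ (I.absNorm : R)).natAbs = I.absNorm := by
  have hrank : Module.finrank ℤ R ≠ 0 := Module.finrank_pos.ne'
  by_cases hI : I.absNorm = 0
  · exact ⟨0, by simp [hI]⟩
  have hI0 : I ≠ ⊥ := fun h => hI (h ▸ Ideal.absNorm_bot)
  have hspan : Ideal.span {(I.absNorm : R)} ≠ ⊥ := fun h =>
    pow_ne_zero _ hI (by rw [← Ideal.absNorm_span_natCast (S := R), h, Ideal.absNorm_bot])
  obtain ⟨a, I', hcop, ha⟩ := exists_isCoprime_mul_eq_span_singleton hI0 hspan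
  refine ⟨a, ?_⟩
  have hcop' := coprime_absNorm_of_isCoprime_span hcop
  rw [natAbs_norm_natCast, ← Ideal.absNorm_span_singleton, ← ha, map_mul,
    ← mul_pow_sub_one hrank, Nat.gcd_mul_left, (hcop'.symm.pow_right _).gcd_eq_one, mul_one]

theorem exists_absNorm_eq_of_not_isPrime_span (hrank : Module.finrank ℤ R ≤ 3) {p : ℕ}
    (hp : p.Prime) (hinert : ¬ (Ideal.span {(p : R)}).IsPrime) :
    ∃ P : Ideal R, P.absNorm = p := by
  have hnorm : (Ideal.span {(p : R)}).absNorm = p ^ Module.finrank ℤ R :=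
    Ideal.absNorm_span_natCast p
  have htop : Ideal.span {(p : R)} ≠ ⊤ := fun h => by
    rw [h, Ideal.absNorm_top] at hnorm
    exact (Nat.one_lt_pow Module.finrank_pos.ne' hp.one_lt).ne hnorm
  obtain ⟨P, hP, hle⟩ := Ideal.exists_le_maximal _ htop
  obtain ⟨J, hJ⟩ := Ideal.dvd_iff_le.mpr hle
  have hmul : P.absNorm * J.absNorm = p ^ Module.finrank ℤ R := by rw [← map_mul, ← hJ, hnorm]
  have hJ1 : J.absNorm ≠ 1 := fun h => by
    rw [hJ, Ideal.absNorm_eq_one_iff.mp h, Ideal.mul_top] at hinert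
    exact hinert hP.isPrime
  have hP1 : P.absNorm ≠ 1 := mt Ideal.absNorm_eq_one_iff.mp hP.ne_top
  obtain ⟨i, -, hi⟩ := (Nat.dvd_prime_pow hp).mp (Dvd.intro _ hmul)
  obtain ⟨j, -, hj⟩ := (Nat.dvd_prime_pow hp).mp (Dvd.intro_left _ hmul)
  have hi0 : i ≠ 0 := fun h => hP1 (by rw [hi, h, pow_zero])
  have hj0 : j ≠ 0 := fun h => hJ1 (by rw [hj, h, pow_zero])
  have hij : i + j = Module.finrank ℤ R :=
    Nat.pow_right_injective hp.two_le (by simpa only [pow_add, ← hi, ← hj] using hmul)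
  obtain rfl | rfl : i = 1 ∨ j = 1 := by omega
  · exact ⟨P, by rw [hi, pow_one]⟩
  · exact ⟨J, by rw [hj, pow_one]⟩

end IdealNorm

theorem stmt_10_general {R : Type*} [CommRing R] [IsDedekindDomain R] [Module.Free ℤ R]
    [Module.Finite ℤ R] (hrank : Module.finrank ℤ R ≤ 3) {S : Submonoid ℕ}
    (hS : S = Submonoid.closure
      (Set.range (fun a : R => (Algebra.norm ℤ a).natAbs) ∪
        {p : ℕ | p.Prime ∧ (Ideal.span {(p : R)}).IsPrime})) :
    gcdClosure S = ⊤ ∧ ∀ p : ℕ, p.Prime → ∃ s ∈ S, ∃ t ∈ S, Nat.gcd s t = p := by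
  have norm_mem (a : R) : (Algebra.norm ℤ a).natAbs ∈ S :=
    hS ▸ Submonoid.subset_closure (Or.inl ⟨a, rfl⟩)
  have exists_gcd_eq (p : ℕ) (hp : p.Prime) : ∃ s ∈ S, ∃ t ∈ S, Nat.gcd s t = p := by
    by_cases hinert : (Ideal.span {(p : R)}).IsPrime
    · have hpS : p ∈ S := hS ▸ Submonoid.subset_closure (Or.inr ⟨hp, hinert⟩)
      exact ⟨p, hpS, p, hpS, Nat.gcd_self p⟩
    · obtain ⟨P, rfl⟩ := exists_absNorm_eq_of_not_isPrime_span hrank hp hinert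
      obtain ⟨a, ha⟩ := exists_gcd_natAbs_norm_eq_absNorm P
      exact ⟨_, norm_mem a, _, norm_mem _, ha⟩
  refine ⟨gcdClosure_eq_top_of_forall_prime fun p hp => ?_, exists_gcd_eq⟩
  obtain ⟨s, hs, t, ht, rfl⟩ := exists_gcd_eq p hp
  exact gcd_mem_gcdClosure hs ht

/-- let `K` be a quadratic number field with ring of integers
`𝓞 K` and absolute norm `N`, and let `S` be the submonoid of `ℕ` generated by
the image of `N` together with the inert primes. Then `S` generates `ℕ` as a
lattice under gcd (every `n` is the gcd of a subset of `S`); in particular, for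
every prime `p` there are `s, t ∈ S` with `gcd s t = p`. -/
theorem stmt_10 (K : Type*) [Field K] [NumberField K]
    (hdeg : Module.finrank ℚ K = 2)
    (S : Submonoid ℕ)
    (hS : S = Submonoid.closure
      (Set.range (fun a : 𝓞 K => (Algebra.norm ℤ a).natAbs) ∪
        {p : ℕ | p.Prime ∧ (Ideal.span {(p : 𝓞 K)}).IsPrime})) :
    (∀ n : ℕ, ∃ T : Set ℕ, T ⊆ (S : Set ℕ) ∧ (∀ t ∈ T, n ∣ t) ∧
      (∀ e : ℕ, (∀ t ∈ T, e ∣ t) → e ∣ n)) ∧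
    (∀ p : ℕ, p.Prime → ∃ s ∈ S, ∃ t ∈ S, Nat.gcd s t = p) := by
  obtain ⟨htop, hprime⟩ := stmt_10_general (by rw [RingOfIntegers.rank, hdeg]; norm_num) hS
  refine ⟨fun n => ?_, hprime⟩
  obtain ⟨T, hTS, rfl⟩ := mem_gcdClosure.mp (htop ▸ Submonoid.mem_top n)
  exact ⟨T, hTS, fun _ => Finset.gcd_dvd, fun _ => Finset.dvd_gcd⟩
end

section
/- Let K be a number field with [K : ℚ] = 2 and ring of integers 𝓞 K, with absolute norm N(a) = |Norm_ℤ(a)| ∈ ℕ, and assume 𝓞 K is nonfactorial (the class group ClassGroup (𝓞 K) is nontrivial). If every element g of ClassGroup (𝓞 K) satisfies g² = 1, then the image of N is closed under division: for all nonzero a, b ∈ 𝓞 K with N(a) ∣ N(b), there exists c ∈ 𝓞 K with N(a) * N(c) = N(b). -/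
open NumberField

/-! In a Galois extension `B / A` of Dedekind domains, the norm of an ideal `I`, extended back to
`B`, is the product of the conjugates of `I`. Hence, if the norm of `I` divides that of `J`, each
prime factor of `I` can be matched with a conjugate of it dividing `J`, which produces a divisor
`I'` of `J` with the same norm as `I`. If the Galois group acts trivially on the class group, then
`I'` also has the class of `I`; for principal `I` and `J`, the cofactor of `I'` in `J` is then
principal, and its generator has the quotient of the norms as its norm. In the quadratic case over
a principal ideal domain `I * σ I` is principal, so the nontrivial automorphism inverts ideal
classes, which is a trivial action when the class group has exponent two. -/

namespace GaloisNorm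

open Ideal
open scoped nonZeroDivisors Pointwise

variable {G A B : Type*} [Group G] [CommRing A] [CommRing B] [MulSemiringAction G B]
  [Algebra A B] [Module.Finite A B] [Module.IsTorsionFree A B]

theorem algebraMap_intNorm_eq_prod_smul [IsDomain A] [IsIntegrallyClosed A] [IsDomain B]
    [IsIntegrallyClosed B] [Fintype G] [IsGaloisGroup G A B] (x : B) :
    algebraMap A B (Algebra.intNorm A B x) = ∏ g : G, g • x := by
  let := FractionRing.liftAlgebra A (FractionRing B)
  let := IsFractionRing.mulSemiringAction G B (FractionRing B)
  have : IsGalois (FractionRing A) (FractionRing B) := IsGaloisGroup.isGalois G _ _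
  rw [Algebra.algebraMap_intNorm_of_isGalois,
    ← (IsGaloisGroup.mulEquivAlgEquiv G A B).toEquiv.prod_comp]
  rfl

variable [IsDedekindDomain A] [IsDedekindDomain B]

variable (G B) in
/-- The action of `G` on `B` induces the trivial action on the ideal class group of `B`. The
conjugate `g • I` is represented by a variable `J` so that the condition does not mention a proof
that `g • I` is nonzero. -/
def ActsTriviallyOnClassGroup : Prop :=
  ∀ (g : G) (I J : (Ideal B)⁰), (J : Ideal B) = g • (I : Ideal B) →
    ClassGroup.mk0 J = ClassGroup.mk0 I

theorem relNorm_eq_top_iff {I : Ideal B} : relNorm A I = ⊤ ↔ I = ⊤ := by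
  refine ⟨fun h ↦ ?_, fun h ↦ h ▸ relNorm_top A⟩
  exact comap_eq_top_iff.mp (top_le_iff.mp (h ▸ relNorm_le_comap A I))

theorem eq_of_dvd_of_relNorm_eq {I J : Ideal B} (hJ : J ≠ 0) (hdvd : I ∣ J)
    (hnorm : relNorm A I = relNorm A J) : I = J := by
  obtain ⟨L, rfl⟩ := hdvd
  have hI : relNorm A I ≠ 0 := mt relNorm_eq_bot_iff.mp (left_ne_zero_of_mul hJ)
  have hL : relNorm A L = ⊤ := by
    rw [map_mul] at hnorm
    exact mul_left_cancel₀ hI (by rw [← hnorm, mul_top])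
  rw [relNorm_eq_top_iff.mp hL, mul_top]

section Galois

variable [IsGaloisGroup G A B]

theorem prod_smul_dvd_map_relNorm [Fintype G] (I : Ideal B) :
    ∏ g : G, g • I ∣ (relNorm A I).map (algebraMap A B) := by
  rw [dvd_iff_le, map_relNorm, span_le]
  rintro _ ⟨x, hx, rfl⟩
  rw [Function.comp_apply, algebraMap_intNorm_eq_prod_smul (G := G)]
  exact prod_mem_prod fun g _ ↦ smul_mem_pointwise_smul g x I hx

/-- Both sides have norm `relNorm A I ^ [B : A]`, so divisibility suffices. -/
theorem map_relNorm_eq_prod_smul [Fintype G] (I : Ideal B) :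
    (relNorm A I).map (algebraMap A B) = ∏ g : G, g • I := by
  by_cases hI : I = 0
  · simp [hI]
  refine (eq_of_dvd_of_relNorm_eq (A := A) ?_ (prod_smul_dvd_map_relNorm I) ?_).symm
  · rw [zero_eq_bot, Ne, map_eq_bot_iff_of_injective (FaithfulSMul.algebraMap_injective A B)]
    exact mt relNorm_eq_bot_iff.mp hI
  · rw [map_prod, relNorm_algebraMap, ← IsGaloisGroup.card_eq_finrank' G A B]
    simp only [relNorm_smul, Finset.prod_const, Finset.card_univ, Nat.card_eq_fintype_card]

theorem exists_smul_dvd_of_relNorm_dvd {P J : Ideal B} (hP : Prime P)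
    (hdvd : relNorm A P ∣ relNorm A J) : ∃ g : G, g • P ∣ J := by
  have := IsGaloisGroup.finite G A B
  have := Fintype.ofFinite G
  have hPJ : P ∣ ∏ g : G, g • J := by
    rw [← map_relNorm_eq_prod_smul (A := A), dvd_iff_le]
    calc (relNorm A J).map (algebraMap A B)
        ≤ (relNorm A P).map (algebraMap A B) := map_mono (le_of_dvd hdvd)
      _ ≤ P := map_le_iff_le_comap.mpr (relNorm_le_comap A P)
  obtain ⟨g, -, hg⟩ := hP.exists_mem_finset_dvd hPJ
  refine ⟨g⁻¹, ?_⟩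
  rwa [dvd_iff_le, ← pointwise_smul_subset_iff, ← dvd_iff_le]

theorem exists_mul_eq_and_relNorm_eq_and_mk0_eq (hG : ActsTriviallyOnClassGroup G B)
    {I J : (Ideal B)⁰} (hdvd : relNorm A (I : Ideal B) ∣ relNorm A (J : Ideal B)) :
    ∃ I' L : (Ideal B)⁰, I' * L = J ∧ relNorm A (I' : Ideal B) = relNorm A (I : Ideal B) ∧
      ClassGroup.mk0 I' = ClassGroup.mk0 I := by
  obtain ⟨I, hI⟩ := I
  induction I using UniqueFactorizationMonoid.induction_on_prime generalizing J with
  | h₁ => exact absurd rfl (nonZeroDivisors.ne_zero hI)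
  | h₂ I hunit =>
    obtain rfl : I = 1 := one_eq_top (R := B) ▸ isUnit_iff.mp hunit
    exact ⟨1, J, one_mul J, rfl, rfl⟩
  | h₃ I P hI' hP ih =>
    have hP₀ : P ∈ (Ideal B)⁰ := mem_nonZeroDivisors_of_ne_zero hP.ne_zero
    have hI₀ : I ∈ (Ideal B)⁰ := mem_nonZeroDivisors_of_ne_zero hI'
    rw [map_mul] at hdvd
    obtain ⟨g, J', hJ⟩ := exists_smul_dvd_of_relNorm_dvd (G := G) hP (dvd_of_mul_right_dvd hdvd)
    obtain ⟨hgP₀, hJ'₀⟩ := mul_mem_nonZeroDivisors.mp (hJ ▸ J.2)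
    have hnorm : relNorm A (g • P) = relNorm A P := relNorm_smul A g P
    rw [hJ, map_mul, hnorm] at hdvd
    have hPnorm : relNorm A P ≠ 0 := mt relNorm_eq_bot_iff.mp hP.ne_zero
    obtain ⟨I', L, hI'L, hI'norm, hI'class⟩ := ih (J := ⟨J', hJ'₀⟩) hI₀
      ((mul_dvd_mul_iff_left hPnorm).mp hdvd)
    refine ⟨⟨g • P, hgP₀⟩ * I', L, ?_, ?_, ?_⟩
    · rw [mul_assoc, hI'L]
      exact Subtype.ext hJ.symm
    · rw [Submonoid.coe_mul, map_mul, map_mul, hnorm, hI'norm]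
    · rw [map_mul, hI'class, hG g ⟨P, hP₀⟩ ⟨g • P, hgP₀⟩ rfl, ← map_mul]
      rfl

theorem exists_associated_intNorm_mul_intNorm (hG : ActsTriviallyOnClassGroup G B) {a b : B}
    (ha : a ≠ 0) (hb : b ≠ 0) (hdvd : Algebra.intNorm A B a ∣ Algebra.intNorm A B b) :
    ∃ c : B, Associated (Algebra.intNorm A B a * Algebra.intNorm A B c)
      (Algebra.intNorm A B b) := by
  have hspan {r : B} (hr : r ≠ 0) : span {r} ∈ (Ideal B)⁰ :=
    mem_nonZeroDivisors_of_ne_zero (mt span_singleton_eq_bot.mp hr)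
  have hclass {r : B} (hr : r ≠ 0) : ClassGroup.mk0 ⟨span {r}, hspan hr⟩ = 1 :=
    (ClassGroup.mk0_eq_one_iff _).mpr ⟨r, rfl⟩
  obtain ⟨I, L, hIL, hInorm, hIclass⟩ := exists_mul_eq_and_relNorm_eq_and_mk0_eq (A := A) hG
    (I := ⟨span {a}, hspan ha⟩) (J := ⟨span {b}, hspan hb⟩)
    (by simpa only [dvd_iff_le, relNorm_singleton, span_singleton_le_span_singleton] using hdvd)
  have hIL' : (I : Ideal B) * L = span {b} := congrArg Subtype.val hIL
  have hLclass : ClassGroup.mk0 L = 1 := by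
    rw [← hclass hb, ← hIL, map_mul, hIclass, hclass ha, one_mul]
  obtain ⟨c, hc⟩ := (ClassGroup.mk0_eq_one_iff L.2).mp hLclass
  refine ⟨c, span_singleton_eq_span_singleton.mp ?_⟩
  calc span {Algebra.intNorm A B a * Algebra.intNorm A B c}
      = relNorm A (span {a}) * relNorm A (span {c}) := by
        simp only [relNorm_singleton, span_singleton_mul_span_singleton]
    _ = relNorm A (I * L : Ideal B) := by rw [map_mul, hInorm, hc, submodule_span_eq]
    _ = span {Algebra.intNorm A B b} := by rw [hIL', relNorm_singleton]

variable (A) in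
theorem actsTriviallyOnClassGroup_of_card_eq_two [IsPrincipalIdealRing A] (hcard : Nat.card G = 2)
    (hsq : ∀ C : ClassGroup B, C ^ 2 = 1) : ActsTriviallyOnClassGroup G B := by
  classical
  have := IsGaloisGroup.finite G A B
  have := Fintype.ofFinite G
  intro g I J hJ
  by_cases hg : g = 1
  · rw [hg, one_smul] at hJ
    rw [Subtype.ext hJ]
  have huniv : (Finset.univ : Finset G) = {1, g} :=
    (Finset.eq_univ_of_card _ (by
      rw [Finset.card_pair (Ne.symm hg), ← hcard, Nat.card_eq_fintype_card])).symm
  have hprod : (I * J : Ideal B) = (relNorm A (I : Ideal B)).map (algebraMap A B) := by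
    rw [map_relNorm_eq_prod_smul (G := G), huniv, Finset.prod_pair (Ne.symm hg), one_smul, ← hJ]
  have hIJ : ClassGroup.mk0 (I * J) = 1 := by
    refine (ClassGroup.mk0_eq_one_iff (I * J).2).mpr ?_
    rw [Submonoid.coe_mul, hprod]
    infer_instance
  rw [map_mul, mul_eq_one_iff_eq_inv'] at hIJ
  rw [hIJ, inv_eq_iff_mul_eq_one, ← sq, hsq]

end Galois

end GaloisNorm

open GaloisNorm in
theorem stmt_11_general (K : Type*) [Field K] [NumberField K] [IsGalois ℚ K]
    (hG : ActsTriviallyOnClassGroup Gal(K/ℚ) (𝓞 K)) {a b : 𝓞 K} (ha : a ≠ 0) (hb : b ≠ 0)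
    (hdvd : (Algebra.norm ℤ a).natAbs ∣ (Algebra.norm ℤ b).natAbs) :
    ∃ c : 𝓞 K,
      (Algebra.norm ℤ a).natAbs * (Algebra.norm ℤ c).natAbs = (Algebra.norm ℤ b).natAbs := by
  have hdvd' : Algebra.intNorm ℤ (𝓞 K) a ∣ Algebra.intNorm ℤ (𝓞 K) b := by
    simpa only [Algebra.intNorm_eq_norm] using Int.natAbs_dvd_natAbs.mp hdvd
  obtain ⟨c, hc⟩ := exists_associated_intNorm_mul_intNorm hG ha hb hdvd'
  refine ⟨c, ?_⟩
  simpa only [Algebra.intNorm_eq_norm, Int.natAbs_mul] using Int.associated_iff_natAbs.mp hc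

/-- let `K` be a quadratic number field whose ring of integers is
nonfactorial. If every element of the class group squares to the identity, then
the image of the absolute norm `N` is closed under division. -/
theorem stmt_11 (K : Type*) [Field K] [NumberField K]
    (hdeg : Module.finrank ℚ K = 2)
    (hnf : Nontrivial (ClassGroup (𝓞 K)))
    (hG : ∀ g : ClassGroup (𝓞 K), g ^ 2 = 1) :
    ∀ a b : 𝓞 K, a ≠ 0 → b ≠ 0 →
      (Algebra.norm ℤ a).natAbs ∣ (Algebra.norm ℤ b).natAbs →
      ∃ c : 𝓞 K,
        (Algebra.norm ℤ a).natAbs * (Algebra.norm ℤ c).natAbs =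
          (Algebra.norm ℤ b).natAbs := by
  intro a b ha hb hdvd
  have : Algebra.IsQuadraticExtension ℚ K := ⟨hdeg⟩
  have hcard : Nat.card Gal(K/ℚ) = 2 := (IsGaloisGroup.card_eq_finrank _ ℚ K).trans hdeg
  exact stmt_11_general K
    (GaloisNorm.actsTriviallyOnClassGroup_of_card_eq_two ℤ hcard hG) ha hb hdvd
end

section
/- Let K be a number field with [K : ℚ] = 2 and ring of integers 𝓞 K, with absolute norm N(a) = |Norm_ℤ(a)| ∈ ℕ, and assume 𝓞 K is nonfactorial (the class group ClassGroup (𝓞 K) is nontrivial). If the image of N is closed under division (for all nonzero a, b ∈ 𝓞 K with N(a) ∣ N(b) there exists c ∈ 𝓞 K with N(a) * N(c) = N(b)), then every element g of ClassGroup (𝓞 K) satisfies g² = 1; equivalently, ClassGroup (𝓞 K) is a finite product of copies of ℤ/2ℤ. -/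
open NumberField

/-!
Suppose that a prime ideal `P` lies in a class `g ^ 2`, and take `I` in the class `g⁻¹`. Then
`I ^ 2 * P` is generated by some `b` with `|N(b)| = N(I) ^ 2 * N(P)`, and `N(I) ^ 2` is the norm of
the integer `N(I)`. Closure under division gives an element of norm `N(P)`, one of whose conjugates
generates `P`. So a class `g ^ 2 ≠ 1` and its inverse contain no prime ideal at all, and this has to
be refuted.

The partial zeta functions of any two ideal classes differ by a bounded amount as `s → 1⁺`. Hence
the `L`-series of the nontrivial class group characters are bounded, and so are the sums
`∑ Re ψ(P) N(P)⁻ˢ` from above. If `h` and `h⁻¹` contain no prime ideal, averaging these sums with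
the weights `1 - Re ψ(h)` leaves only the principal primes, so `∑ 1 / N(P)` over principal `P`
converges. But closure under division also makes every prime `p ≡ 1 mod q`, for a suitable `q`, the
norm of an element, hence of a principal prime ideal, and `∑ 1 / p` over these `p` diverges.

The comparison of partial zeta functions sums the weight `intWeight`, a function of
`(|σ a|, |τ a|)` which varies slowly, over an ideal `J` and over `𝓞 K`: cosets of `J` have nearly
equal sums. Its `tent` factor in `log |σ a| - log |τ a|` has the same sum over every orbit of the
unit group, so the sum over `J` is a multiple of the partial zeta function of the class inverse to
that of `J`.
-/

section EulerProduct

variable {M F : Type*} [CommMonoidWithZero M] [NormedField F] [CompleteSpace F]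

lemma tsum_indicator_inter_not_dvd [IsCancelMulZero M] (f : M →*₀ F)
    (hf : Summable fun a ↦ ‖f a‖) {q : M} (hq : q ≠ 0) {E : Set M}
    (hE : ∀ a, q * a ∈ E ↔ a ∈ E) :
    ∑' a, (E ∩ {a | ¬ q ∣ a}).indicator f a = (1 - f q) * ∑' a, E.indicator f a := by
  have hf' : Summable f := hf.of_norm
  have hmul : ∑' a, (E ∩ {a | q ∣ a}).indicator f a = f q * ∑' a, E.indicator f a := by
    rw [← tsum_mul_left, ← (mul_right_injective₀ hq).tsum_eq]
    · refine tsum_congr fun a ↦ ?_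
      by_cases ha : a ∈ E
      · have hqa : q * a ∈ E ∩ {a | q ∣ a} := ⟨(hE a).2 ha, dvd_mul_right q a⟩
        rw [Set.indicator_of_mem ha, Set.indicator_of_mem hqa, map_mul]
      · rw [Set.indicator_of_notMem ha, Set.indicator_of_notMem fun h ↦ ha ((hE a).1 h.1),
          mul_zero]
    · intro a ha
      obtain ⟨b, rfl⟩ := (Set.mem_of_indicator_ne_zero ha).2
      exact ⟨b, rfl⟩
  have hsplit (a : M) : (E ∩ {a | ¬ q ∣ a}).indicator f a =
      E.indicator f a - (E ∩ {a | q ∣ a}).indicator f a := by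
    by_cases ha : a ∈ E <;> by_cases hqa : q ∣ a <;> simp [ha, hqa]
  rw [tsum_congr hsplit, (hf'.indicator _).tsum_sub (hf'.indicator _), hmul]
  ring

variable [UniqueFactorizationMonoid M] [Subsingleton Mˣ]

lemma tsum_indicator_not_dvd (f : M →*₀ F) (hf : Summable fun a ↦ ‖f a‖)
    (S : Finset {p : M // Prime p}) :
    ∑' a, {a : M | ∀ p ∈ S, ¬ p.1 ∣ a}.indicator f a = (∏ p ∈ S, (1 - f p.1)) * ∑' a, f a := by
  classical
  induction S using Finset.induction_on with
  | empty => simp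
  | insert q S hq ih =>
    have hmem (a : M) : q.1 * a ∈ {a : M | ∀ p ∈ S, ¬ p.1 ∣ a} ↔
        a ∈ {a : M | ∀ p ∈ S, ¬ p.1 ∣ a} := by
      refine forall₂_congr fun p hp ↦ not_congr ⟨fun h ↦ ?_, fun h ↦ h.mul_left _⟩
      refine (p.2.dvd_or_dvd h).resolve_left fun hpq ↦ hq ?_
      rwa [← Subtype.ext (associated_iff_eq.1 ((p.2.dvd_prime_iff_associated q.2).1 hpq))]
    have hinsert : {a : M | ∀ p ∈ insert q S, ¬ p.1 ∣ a} =
        {a : M | ∀ p ∈ S, ¬ p.1 ∣ a} ∩ {a | ¬ q.1 ∣ a} := by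
      ext a
      simp [and_comm]
    rw [hinsert, tsum_indicator_inter_not_dvd f hf q.2.ne_zero hmem, ih, Finset.prod_insert hq,
      mul_assoc]

lemma tendsto_prod_one_sub_mul_tsum (f : M →*₀ F) (hf : Summable fun a ↦ ‖f a‖) :
    Filter.Tendsto (fun S : Finset {p : M // Prime p} ↦ (∏ p ∈ S, (1 - f p.1)) * ∑' a, f a)
      Filter.atTop (nhds 1) := by
  have hone : ∑' a, Set.indicator {1} f a = 1 := by
    rw [tsum_eq_single 1 (fun b hb ↦ by simp [hb])]
    simp
  rw [show nhds (1 : F) = nhds (∑' a, Set.indicator {1} f a) by rw [hone]]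
  refine Filter.Tendsto.congr (tsum_indicator_not_dvd f hf)
    (tendsto_tsum_of_dominated_convergence hf (fun a ↦ tendsto_const_nhds.congr' ?_)
      (.of_forall fun S a ↦ norm_indicator_le_norm_self _ _))
  by_cases ha0 : a = 0
  · exact .of_forall fun S ↦ by simp [Set.indicator, ha0]
  by_cases ha : IsUnit a
  · obtain rfl : a = 1 := by simpa using ha
    refine .of_forall fun S ↦ ?_
    refine (Set.indicator_of_mem (s := {1}) rfl f).trans (Set.indicator_of_mem ?_ f).symm
    exact fun p _ h ↦ p.2.not_isUnit (isUnit_of_dvd_one h)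
  · obtain ⟨p, hp, hpa⟩ := WfDvdMonoid.exists_irreducible_factor ha ha0
    filter_upwards [Filter.eventually_ge_atTop {⟨p, hp.prime⟩}] with S hS
    rw [Set.indicator_of_notMem, Set.indicator_of_notMem]
    · exact fun h ↦ h _ (hS (Finset.mem_singleton_self _)) hpa
    · rintro rfl
      exact ha isUnit_one

lemma norm_one_sub_le_exp (z : ℂ) : ‖1 - z‖ ≤ Real.exp (-z.re + ‖z‖ ^ 2 / 2) := by
  refine le_of_sq_le_sq ?_ (Real.exp_pos _).le
  calc ‖1 - z‖ ^ 2 = 2 * (-z.re + ‖z‖ ^ 2 / 2) + 1 := by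
        rw [← Complex.normSq_eq_norm_sq, ← Complex.normSq_eq_norm_sq, Complex.normSq_sub]
        simp
        ring
    _ ≤ Real.exp (2 * (-z.re + ‖z‖ ^ 2 / 2)) := Real.add_one_le_exp _
    _ = Real.exp (-z.re + ‖z‖ ^ 2 / 2) ^ 2 := by rw [← Real.exp_nat_mul]; norm_cast

lemma tsum_re_le_log_norm_tsum (f : M →*₀ ℂ) (hf : Summable fun a ↦ ‖f a‖)
    (hf2 : Summable fun p : {p : M // Prime p} ↦ ‖f p.1‖ ^ 2) {B : ℝ} (hB : ‖∑' a, f a‖ ≤ B) :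
    ∑' p : {p : M // Prime p}, (f p.1).re ≤
      Real.log B + (∑' p : {p : M // Prime p}, ‖f p.1‖ ^ 2) / 2 := by
  have hre : Summable fun p : {p : M // Prime p} ↦ (f p.1).re :=
    .of_norm_bounded (hf.comp_injective Subtype.val_injective) fun p ↦ Complex.abs_re_le_norm _
  have hexp : Filter.Tendsto (fun S : Finset {p : M // Prime p} ↦
      Real.exp (∑ p ∈ S, (-(f p.1).re + ‖f p.1‖ ^ 2 / 2)) * B) Filter.atTop
      (nhds (Real.exp (∑' p : {p : M // Prime p}, (-(f p.1).re + ‖f p.1‖ ^ 2 / 2)) * B)) :=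
    ((Real.continuous_exp.tendsto _).comp (hre.neg.add (hf2.div_const 2)).hasSum).mul_const B
  have hle := le_of_tendsto_of_tendsto' (tendsto_prod_one_sub_mul_tsum f hf).norm hexp fun S ↦ by
    rw [norm_mul, norm_prod, Real.exp_sum]
    gcongr
    exact norm_one_sub_le_exp _
  rw [norm_one, hre.neg.tsum_add (hf2.div_const 2), tsum_neg, tsum_div_const] at hle
  have hB0 : 0 < B := pos_of_mul_pos_right (one_pos.trans_le hle) (Real.exp_pos _).le
  have hlog := Real.log_le_log one_pos hle
  rw [Real.log_one, Real.log_mul (Real.exp_ne_zero _) hB0.ne', Real.log_exp] at hlog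
  linarith

end EulerProduct

section PrimesInProgressions

open ArithmeticFunction vonMangoldt Filter Topology

variable {q : ℕ}

lemma summable_residueClass_div_rpow (a : ZMod q) {x : ℝ} (hx : 1 < x) :
    Summable fun n : ℕ ↦ residueClass a n / (n : ℝ) ^ x :=
  LSeries.summable_real_of_abscissaOfAbsConv_lt <|
    (abscissaOfAbsConv_residueClass_le_one a).trans_lt <| mod_cast hx

lemma indicator_prime_residueClass_eq (a : ZMod q) (x : ℝ) (n : ℕ) :
    {p : ℕ | p.Prime ∧ (p : ZMod q) = a}.indicator (fun n : ℕ ↦ Real.log n / (n : ℝ) ^ x) n =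
      (if n.Prime then residueClass a n else 0) / (n : ℝ) ^ x := by
  by_cases hn : n.Prime <;> by_cases hna : (n : ZMod q) = a <;>
    simp [Set.indicator, residueClass, hn, hna, vonMangoldt_apply_prime]

variable [NeZero q] {a : ZMod q}

lemma exists_le_tsum_prime_residueClass_log_div_rpow (ha : IsUnit a) :
    ∃ C : ℝ, ∀ x ∈ Set.Ioc (1 : ℝ) 2, (q.totient : ℝ)⁻¹ / (x - 1) - C ≤
      ∑' n : ℕ, {p : ℕ | p.Prime ∧ (p : ZMod q) = a}.indicator
        (fun n : ℕ ↦ Real.log n / (n : ℝ) ^ x) n := by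
  obtain ⟨C, hC⟩ := LSeries_residueClass_lower_bound ha
  refine ⟨C + ∑' n : ℕ, (if n.Prime then 0 else residueClass a n) / n, fun x hx ↦ ?_⟩
  have hsum := summable_residueClass_div_rpow a hx.1
  have hprime : Summable fun n : ℕ ↦ (if n.Prime then residueClass a n else 0) / (n : ℝ) ^ x := by
    refine hsum.of_nonneg_of_le (fun n ↦ ?_) (fun n ↦ ?_) <;> have := residueClass_nonneg a n
    · split_ifs <;> positivity
    · gcongr
      split_ifs
      exacts [le_rfl, this]
  have hnonprime := summable_residueClass_non_primes_div a
  have hsplit : ∑' n : ℕ, residueClass a n / (n : ℝ) ^ x ≤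
      ∑' n : ℕ, (if n.Prime then residueClass a n else 0) / (n : ℝ) ^ x +
        ∑' n : ℕ, (if n.Prime then 0 else residueClass a n) / (n : ℝ) := by
    rw [← hprime.tsum_add hnonprime]
    refine hsum.tsum_le_tsum (fun n ↦ ?_) (hprime.add hnonprime)
    rcases n.eq_zero_or_pos with rfl | hn0
    · simp
    by_cases hn : n.Prime
    · simp [hn]
    · simp only [hn, if_false, zero_div, zero_add]
      exact div_le_div_of_nonneg_left (residueClass_nonneg a _) (mod_cast hn0)
        (Real.self_le_rpow_of_one_le (mod_cast hn0) hx.1.le)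
  simp_rw [indicator_prime_residueClass_eq]
  linarith [hC hx]

lemma mul_log_div_rpow_one_add_le (n : ℕ) (t : ℝ) :
    t * (Real.log n / (n : ℝ) ^ (1 + t)) ≤ (n : ℝ)⁻¹ := by
  rcases n.eq_zero_or_pos with rfl | hn
  · simp
  have hn' : (0 : ℝ) < n := mod_cast hn
  have hlog : t * Real.log n ≤ (n : ℝ) ^ t := by
    rw [Real.rpow_def_of_pos hn']
    linarith [Real.add_one_le_exp (Real.log n * t)]
  calc t * (Real.log n / (n : ℝ) ^ (1 + t)) = t * Real.log n / (n : ℝ) ^ t * (n : ℝ)⁻¹ := by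
        rw [Real.rpow_add hn', Real.rpow_one]
        field_simp
    _ ≤ 1 * (n : ℝ)⁻¹ := by
        gcongr
        exact (div_le_one (by positivity)).2 hlog
    _ = (n : ℝ)⁻¹ := one_mul _

lemma tendsto_mul_tsum_indicator_log_div_rpow_zero {S : Set ℕ}
    (hS : Summable (S.indicator fun n : ℕ ↦ (n : ℝ)⁻¹)) :
    Tendsto (fun t : ℝ ↦ t * ∑' n, S.indicator (fun n : ℕ ↦ Real.log n / (n : ℝ) ^ (1 + t)) n)
      (𝓝[>] 0) (𝓝 0) := by
  simp_rw [← tsum_mul_left, ← Set.indicator_const_mul]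
  rw [← tsum_zero (α := ℝ) (β := ℕ)]
  refine tendsto_tsum_of_dominated_convergence hS (fun n ↦ ?_) ?_
  · by_cases hn : n ∈ S ∧ n ≠ 0
    · simp only [Set.indicator_of_mem hn.1]
      have hcont : ContinuousAt (fun t : ℝ ↦ t * (Real.log n / (n : ℝ) ^ (1 + t))) 0 := by
        have : (n : ℝ) ≠ 0 := mod_cast hn.2
        fun_prop (disch := positivity)
      simpa using hcont.tendsto.mono_left nhdsWithin_le_nhds
    · rcases not_and_or.1 hn with hn | hn
      · simp [Set.indicator_of_notMem hn]
      · simp [not_not.1 hn, Set.indicator]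
  · filter_upwards [self_mem_nhdsWithin] with t ht n
    have ht0 : 0 < t := by simpa using ht
    rw [Real.norm_of_nonneg (Set.indicator_nonneg (fun n _ ↦ by positivity) n)]
    exact Set.indicator_le_indicator (mul_log_div_rpow_one_add_le n t)

theorem not_summable_indicator_prime_residueClass_inv (ha : IsUnit a) :
    ¬ Summable ({p : ℕ | p.Prime ∧ (p : ZMod q) = a}.indicator fun n : ℕ ↦ (n : ℝ)⁻¹) := by
  intro hsum
  obtain ⟨C, hC⟩ := exists_le_tsum_prime_residueClass_log_div_rpow ha
  have hlower : Tendsto (fun t : ℝ ↦ (q.totient : ℝ)⁻¹ - C * t) (𝓝[>] 0) (𝓝 (q.totient : ℝ)⁻¹) := by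
    have hcont : ContinuousAt (fun t : ℝ ↦ (q.totient : ℝ)⁻¹ - C * t) 0 := by fun_prop
    simpa using hcont.tendsto.mono_left nhdsWithin_le_nhds
  have hle : (q.totient : ℝ)⁻¹ ≤ 0 := by
    refine le_of_tendsto_of_tendsto hlower (tendsto_mul_tsum_indicator_log_div_rpow_zero hsum) ?_
    filter_upwards [Ioc_mem_nhdsGT (one_pos (α := ℝ))] with t ht
    have hbound := mul_le_mul_of_nonneg_left
      (hC (1 + t) ⟨by linarith [ht.1], by linarith [ht.2]⟩) ht.1.le
    rw [add_sub_cancel_left] at hbound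
    have ht0 : t ≠ 0 := ht.1.ne'
    refine le_trans (le_of_eq ?_) hbound
    field_simp
  exact hle.not_gt (inv_pos.2 (mod_cast q.totient.pos_of_neZero))

end PrimesInProgressions

section Legendre

lemma isSquare_intCast_zmod_of_mod_eq_one {d : ℤ} {p : ℕ} [Fact p.Prime]
    (hp : p % (4 * d.natAbs) = 1) : IsSquare (d : ZMod p) := by
  have hodd : Odd p := by
    rw [Nat.odd_iff, ← Nat.mod_mod_of_dvd p (show 2 ∣ 4 * d.natAbs from ⟨2 * d.natAbs, by ring⟩),
      hp]
  have hone : legendreSym p d = 1 := by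
    rw [jacobiSym.legendreSym.to_jacobiSym, jacobiSym.mod_right d hodd, hp, jacobiSym.one_right]
  by_cases h0 : (d : ZMod p) = 0
  · rw [h0]
    exact IsSquare.zero
  · exact (legendreSym.eq_one_iff p h0).1 hone

lemma sq_sub_le_of_le_sqrt {m n N : ℕ} (hm : m ≤ Nat.sqrt N) (hn : n ≤ Nat.sqrt N) :
    ((m : ℤ) - n) ^ 2 ≤ N := by
  have hN : (Nat.sqrt N : ℤ) ^ 2 ≤ N := mod_cast Nat.sqrt_le' N
  have hmn : |(m : ℤ) - n| ≤ Nat.sqrt N := abs_le.2 ⟨by omega, by omega⟩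
  exact (sq_le_sq.2 (hmn.trans (le_abs_self _))).trans hN

lemma mul_lt_sqrt_add_one_mul_sqrt_add_one_mul_sqrt_add_one (m n : ℕ) :
    m * n < (Nat.sqrt (m * n) + 1) * ((Nat.sqrt m + 1) * (Nat.sqrt n + 1)) := by
  refine lt_of_pow_lt_pow_left₀ 2 (Nat.zero_le _) ?_
  calc (m * n) ^ 2 = (m * n) * (m * n) := sq _
    _ < (Nat.sqrt (m * n) + 1) ^ 2 * ((Nat.sqrt m + 1) ^ 2 * (Nat.sqrt n + 1) ^ 2) :=
        Nat.mul_lt_mul'' (Nat.lt_succ_sqrt' _)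
          (Nat.mul_lt_mul'' (Nat.lt_succ_sqrt' _) (Nat.lt_succ_sqrt' _))
    _ = _ := by ring

/-- Thue's lemma for two linear congruences in three unknowns. -/
lemma exists_small_solution_of_congruences {m n : ℕ} (hm : 0 < m) (hn : 0 < n) (r : ℤ) :
    ∃ x y z : ℤ, (x ≠ 0 ∨ y ≠ 0 ∨ z ≠ 0) ∧ x ^ 2 ≤ m * n ∧ y ^ 2 ≤ m ∧ z ^ 2 ≤ n ∧
      (m : ℤ) ∣ x - r * y ∧ (n : ℤ) ∣ x - z := by
  classical
  have : NeZero m := ⟨hm.ne'⟩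
  have : NeZero n := ⟨hn.ne'⟩
  let box : Finset (ℕ × ℕ × ℕ) := Finset.range (Nat.sqrt (m * n) + 1) ×ˢ
    Finset.range (Nat.sqrt m + 1) ×ˢ Finset.range (Nat.sqrt n + 1)
  let residue : ℕ × ℕ × ℕ → ZMod m × ZMod n := fun v ↦
    (((v.1 : ℤ) - r * v.2.1 : ℤ), ((v.1 : ℤ) - v.2.2 : ℤ))
  have hcard : (Finset.univ : Finset (ZMod m × ZMod n)).card < box.card := by
    simpa [box, ZMod.card] using mul_lt_sqrt_add_one_mul_sqrt_add_one_mul_sqrt_add_one m n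
  obtain ⟨u, hu, v, hv, huv, heq⟩ := Finset.exists_ne_map_eq_of_card_lt_of_maps_to hcard
    (f := residue) (fun _ _ ↦ Finset.mem_univ _)
  simp only [box, Finset.mem_product, Finset.mem_range, Nat.lt_succ_iff] at hu hv
  obtain ⟨heq_m, heq_n⟩ := Prod.ext_iff.1 heq
  refine ⟨u.1 - v.1, u.2.1 - v.2.1, u.2.2 - v.2.2, ?_,
    mod_cast sq_sub_le_of_le_sqrt hu.1 hv.1, sq_sub_le_of_le_sqrt hu.2.1 hv.2.1,
    sq_sub_le_of_le_sqrt hu.2.2 hv.2.2, ?_, ?_⟩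
  · by_contra! h
    exact huv (Prod.ext (by omega) (Prod.ext (by omega) (by omega)))
  · convert (ZMod.intCast_eq_intCast_iff_dvd_sub _ _ _).1 heq_m.symm using 1
    ring
  · convert (ZMod.intCast_eq_intCast_iff_dvd_sub _ _ _).1 heq_n.symm using 1
    ring

lemma eq_zero_or_eq_neg_of_small_of_pos {d : ℤ} {p : ℕ} (hp : p.Prime) (hd : 0 < d)
    (hpd : IsCoprime (p : ℤ) d) {x y z : ℤ} (hx : x ^ 2 ≤ p * d) (hy : y ^ 2 < p) (hz : z ^ 2 ≤ d)
    (hdvd : p * d ∣ x ^ 2 - d * y ^ 2 - p * z ^ 2) :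
    x ^ 2 - d * y ^ 2 - p * z ^ 2 = 0 ∨ x ^ 2 - d * y ^ 2 - p * z ^ 2 = -(p * d) := by
  have hp' := Nat.prime_iff_prime_int.1 hp
  have hp0 : (0 : ℤ) < p := mod_cast hp.pos
  have hxne : x ^ 2 ≠ p * d := fun h ↦ by
    obtain ⟨m, rfl⟩ := hp'.dvd_of_dvd_pow (h ▸ dvd_mul_right (p : ℤ) d)
    have hm : (p : ℤ) * m ^ 2 = d := mul_left_cancel₀ hp0.ne' (by linear_combination h)
    exact hp'.not_isUnit (hpd.isUnit_of_dvd' dvd_rfl ⟨m ^ 2, hm.symm⟩)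
  have hxlt : x ^ 2 < p * d := lt_of_le_of_ne hx hxne
  obtain ⟨k, hk⟩ := hdvd
  have hk1 : k < 1 := by nlinarith [sq_nonneg y, sq_nonneg z]
  have hk2 : -2 < k := by nlinarith [sq_nonneg x]
  obtain rfl | rfl : k = 0 ∨ k = -1 := by omega
  · exact .inl (by linarith)
  · exact .inr (by linarith)

lemma eq_zero_or_eq_neg_of_small_of_neg {d : ℤ} {p : ℕ} (hd : d ≤ -2)
    {x y z : ℤ} (hx : x ^ 2 ≤ p * -d) (hy : y ^ 2 < p) (hz : z ^ 2 ≤ -d) (hxz : d ∣ x - z)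
    (hdvd : p * d ∣ x ^ 2 - d * y ^ 2 - p * z ^ 2) :
    x ^ 2 - d * y ^ 2 - p * z ^ 2 = 0 ∨ x ^ 2 - d * y ^ 2 - p * z ^ 2 = -(p * d) := by
  obtain ⟨k, hk⟩ := hdvd
  have hk1 : -2 < k := by nlinarith [sq_nonneg x, sq_nonneg y, sq_nonneg z]
  have hk2 : k ≤ 1 := by nlinarith [sq_nonneg x, sq_nonneg y, sq_nonneg z]
  obtain rfl | rfl | rfl : k = 0 ∨ k = -1 ∨ k = 1 := by omega
  · exact .inl (by linarith)
  · exact .inr (by linarith)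
  · exfalso
    have hz0 : z ^ 2 = -d := by nlinarith [sq_nonneg x, sq_nonneg y, sq_nonneg z]
    obtain rfl : x = 0 := sq_eq_zero_iff.1 (by nlinarith [sq_nonneg x, sq_nonneg y, sq_nonneg z])
    obtain ⟨m, rfl⟩ : d ∣ z := by simpa using hxz
    have hm : d * m ^ 2 = -1 :=
      mul_left_cancel₀ (show d ≠ 0 by omega) (by linear_combination hz0)
    have hunit : IsUnit d := isUnit_iff_dvd_one.2 ⟨-m ^ 2, by linear_combination hm⟩
    rcases Int.isUnit_iff.1 hunit with h | h <;> omega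

lemma eq_zero_of_sq_eq_mul_sq {d : ℤ} (hd : ¬ IsSquare d) {x y : ℤ} (h : x ^ 2 = d * y ^ 2) :
    x = 0 ∧ y = 0 := by
  have hy : y = 0 := by
    by_contra hy
    obtain ⟨m, rfl⟩ : y ∣ x := (Int.pow_dvd_pow_iff two_ne_zero).1 ⟨d, by linarith⟩
    exact hd ⟨m, mul_left_cancel₀ (pow_ne_zero 2 hy) (by linear_combination -h)⟩
  subst hy
  simpa using h

lemma exists_small_zero_or_eq_neg {d : ℤ} {p : ℕ} (hp : p.Prime) (hd0 : d ≠ 0) (hd : d ≠ -1)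
    (hmod : p % (4 * d.natAbs) = 1) :
    ∃ x y z : ℤ, (x ≠ 0 ∨ y ≠ 0 ∨ z ≠ 0) ∧
      (x ^ 2 - d * y ^ 2 - p * z ^ 2 = 0 ∨ x ^ 2 - d * y ^ 2 - p * z ^ 2 = -(p * d)) := by
  have := Fact.mk hp
  obtain ⟨r, k, hk⟩ : ∃ r : ℤ, (p : ℤ) ∣ r ^ 2 - d := by
    obtain ⟨s, hs⟩ := isSquare_intCast_zmod_of_mod_eq_one hmod
    obtain ⟨r, rfl⟩ := ZMod.intCast_surjective s
    exact ⟨r, (ZMod.intCast_eq_intCast_iff_dvd_sub _ _ _).1 (by push_cast; rw [hs, sq])⟩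
  obtain ⟨n, hn⟩ : d ∣ p - 1 := by
    have hmod' : (p : ℤ) % (4 * d.natAbs : ℕ) = 1 := mod_cast hmod
    have hdvd := Int.dvd_self_sub_of_emod_eq hmod'
    exact Int.natAbs_dvd.1 ((Int.natCast_dvd_natCast.2 (dvd_mul_left _ _)).trans hdvd)
  have hcop : IsCoprime (p : ℤ) d := ⟨1, -n, by linear_combination hn⟩
  obtain ⟨x, y, z, hne, hx, hy, hz, ⟨m, hxy⟩, hxz⟩ :=
    exists_small_solution_of_congruences hp.pos (Int.natAbs_pos.2 hd0) r
  have hy' : y ^ 2 < p := hy.lt_of_ne fun h ↦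
    (Nat.prime_iff_prime_int.1 hp).irreducible.not_isSquare ⟨y, by rw [← h, sq]⟩
  obtain ⟨l, hl⟩ := Int.natAbs_dvd.1 hxz
  have hQ : p * d ∣ x ^ 2 - d * y ^ 2 - p * z ^ 2 := hcop.mul_dvd
    ⟨m * (x + r * y) + k * y ^ 2 - z ^ 2, by linear_combination (x + r * y) * hxy + y ^ 2 * hk⟩
    ⟨l * (x + z) - n * z ^ 2 - y ^ 2, by linear_combination (x + z) * hl - z ^ 2 * hn⟩
  refine ⟨x, y, z, hne, ?_⟩
  rcases hd0.lt_or_gt with hneg | hpos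
  · rw [Int.ofNat_natAbs_of_nonpos hneg.le] at hx hz
    exact eq_zero_or_eq_neg_of_small_of_neg (by omega) hx hy' hz ⟨l, hl⟩ hQ
  · rw [Int.natAbs_of_nonneg hpos.le] at hx hz
    exact eq_zero_or_eq_neg_of_small_of_pos hp hpos hcop hx hy' hz hQ

/-- A case of Legendre's theorem on `x ^ 2 - d y ^ 2 = p k ^ 2`. -/
lemma exists_sq_sub_mul_sq_eq_prime_mul_sq {d : ℤ} {p : ℕ} (hp : p.Prime) (hsq : ¬ IsSquare d)
    (hd : d ≠ -1) (hmod : p % (4 * d.natAbs) = 1) :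
    ∃ x y k : ℤ, k ≠ 0 ∧ x ^ 2 - d * y ^ 2 = p * k ^ 2 := by
  have hd0 : d ≠ 0 := fun h ↦ hsq (h ▸ IsSquare.zero)
  obtain ⟨x, y, z, hne, h | h⟩ := exists_small_zero_or_eq_neg hp hd0 hd hmod
  · refine ⟨x, y, z, ?_, by linarith⟩
    rintro rfl
    obtain ⟨rfl, rfl⟩ := eq_zero_of_sq_eq_mul_sq hsq (x := x) (y := y) (by linarith)
    simp at hne
  · refine ⟨x * z + d * y, x + y * z, z ^ 2 - d, fun hz ↦ hsq ⟨z, by linarith⟩, ?_⟩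
    linear_combination (z ^ 2 - d) * h

end Legendre

section EmbeddingPair

variable {K : Type*} [Field K] [NumberField K]

/-- `σ` and `τ` are the two complex embeddings of a quadratic number field, in some order;
this encodes `[K : ℚ] = 2` (see `IsEmbeddingPair.finrank_eq_two`). -/
structure IsEmbeddingPair (σ τ : K →+* ℂ) : Prop where
  ne : σ ≠ τ
  eq_or_eq : ∀ ρ, ρ = σ ∨ ρ = τ

lemma exists_isEmbeddingPair (hdeg : Module.finrank ℚ K = 2) :
    ∃ σ τ : K →+* ℂ, IsEmbeddingPair σ τ := by
  classical
  obtain ⟨σ, τ, hne, huniv⟩ := Finset.card_eq_two.1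
    ((Finset.card_univ (α := K →+* ℂ)).trans ((NumberField.Embeddings.card K ℂ).trans hdeg))
  exact ⟨σ, τ, hne, fun ρ ↦ by simpa [huniv] using Finset.mem_univ ρ⟩

namespace IsEmbeddingPair

variable {σ τ : K →+* ℂ} (h : IsEmbeddingPair σ τ)
include h

lemma univ_eq [DecidableEq (K →+* ℂ)] : (Finset.univ : Finset (K →+* ℂ)) = {σ, τ} := by
  ext ρ
  simpa using h.eq_or_eq ρ

lemma finrank_eq_two : Module.finrank ℚ K = 2 := by
  classical
  rw [← NumberField.Embeddings.card K ℂ, ← Finset.card_univ, h.univ_eq, Finset.card_pair h.ne]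

lemma norm_eq (a : 𝓞 K) : ((Algebra.norm ℤ a : ℤ) : ℂ) = σ a * τ a := by
  classical
  have hnorm := Algebra.norm_eq_prod_embeddings ℚ ℂ (a : K)
  rw [← Algebra.coe_norm_int, map_intCast] at hnorm
  rw [hnorm, ← Finset.prod_pair (f := fun ρ : K →+* ℂ ↦ ρ a) h.ne, ← h.univ_eq]
  exact (Fintype.prod_equiv (RingHom.equivRatAlgHom K ℂ) _ _ fun _ ↦ rfl).symm

lemma natAbs_norm_eq (a : 𝓞 K) : ((Algebra.norm ℤ a).natAbs : ℝ) = ‖σ a‖ * ‖τ a‖ := by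
  rw [← norm_mul, ← h.norm_eq, Complex.norm_intCast, Nat.cast_natAbs, Int.cast_abs]

lemma norm_intCast (k : ℤ) : Algebra.norm ℤ (k : 𝓞 K) = k ^ 2 := by
  rw [← eq_intCast (algebraMap ℤ (𝓞 K)), Algebra.norm_algebraMap, RingOfIntegers.rank,
    h.finrank_eq_two]

lemma exists_apply_ne : ∃ α : 𝓞 K, σ α ≠ τ α := by
  by_contra! heq
  refine h.ne (RingHom.ext fun x ↦ ?_)
  obtain ⟨a, b, _, rfl⟩ := IsFractionRing.div_surjective (A := 𝓞 K) x
  rw [map_div₀, map_div₀]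
  exact congr_arg₂ _ (heq a) (heq b)

lemma exists_intCast_eq_add (α : 𝓞 K) : ∃ t : ℤ, (t : ℂ) = σ α + τ α := by
  refine ⟨Algebra.norm ℤ (1 + α) - 1 - Algebra.norm ℤ α, ?_⟩
  push_cast
  rw [h.norm_eq, h.norm_eq]
  simp only [map_add, map_one]
  ring

lemma exists_sq_eq_intCast :
    ∃ (d : ℤ) (θ : 𝓞 K), ¬ IsSquare d ∧ d ≠ -1 ∧ σ θ ^ 2 = d ∧ τ θ = -σ θ := by
  obtain ⟨α, hα⟩ := h.exists_apply_ne
  obtain ⟨t, ht⟩ := h.exists_intCast_eq_add α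
  set n := Algebra.norm ℤ α
  have hn' : (n : ℂ) = σ α * τ α := h.norm_eq α
  -- The factor `2` keeps `d` away from `-1`.
  set θ : 𝓞 K := 2 * (2 * α - t) with hθ
  have hσ : σ θ = 2 * (σ α - τ α) := by
    simp only [hθ, map_mul, map_sub, map_ofNat, map_intCast, ht]
    ring
  have hτ : τ θ = -σ θ := by
    rw [hσ]
    simp only [hθ, map_mul, map_sub, map_ofNat, map_intCast, ht]
    ring
  have hd : σ θ ^ 2 = (4 * (t ^ 2 - 4 * n) : ℤ) := by
    rw [hσ]
    push_cast
    rw [ht, hn']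
    ring
  refine ⟨_, θ, ?_, by omega, hd, hτ⟩
  rintro ⟨m, hm⟩
  have hsq : (θ : K) ^ 2 = (m : K) ^ 2 := σ.injective (by
    rw [map_pow, hd, hm]
    simp [sq])
  have heq : σ θ = τ θ := by
    rcases sq_eq_sq_iff_eq_or_eq_neg.1 hsq with h | h <;> rw [h] <;> simp
  refine mul_ne_zero two_ne_zero (sub_ne_zero.2 hα) ?_
  rw [← hσ, ← self_eq_neg, ← hτ, heq]

lemma exists_norm_eq_sq_sub_mul_sq :
    ∃ (d : ℤ) (θ : 𝓞 K), ¬ IsSquare d ∧ d ≠ -1 ∧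
      ∀ x y : ℤ, Algebra.norm ℤ ((x : 𝓞 K) + y * θ) = x ^ 2 - d * y ^ 2 := by
  obtain ⟨d, θ, hsq, hd, hσ, hτ⟩ := h.exists_sq_eq_intCast
  refine ⟨d, θ, hsq, hd, fun x y ↦ ?_⟩
  rw [← Int.cast_inj (α := ℂ), h.norm_eq]
  push_cast
  simp only [map_add, map_mul, map_intCast]
  rw [hτ]
  linear_combination -(y : ℂ) ^ 2 * hσ

end IsEmbeddingPair

end EmbeddingPair

section NormClosedUnderDivision

variable {K : Type*} [Field K] [NumberField K]

lemma prod_galRestrict_eq_norm_int [IsGalois ℚ K] (c : 𝓞 K) :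
    ∏ s : Gal(K/ℚ), galRestrict ℤ ℚ K (𝓞 K) s c = (Algebra.norm ℤ c : ℤ) := by
  apply RingOfIntegers.ext
  simp only [map_prod, algebraMap_galRestrict_apply]
  rw [← Algebra.norm_eq_prod_automorphisms, ← Algebra.coe_norm_int]
  simp

lemma isPrincipal_of_prime_of_natAbs_norm_eq [IsGalois ℚ K] {P : Ideal (𝓞 K)} (hP : Prime P)
    {c : 𝓞 K} (hc : (Algebra.norm ℤ c).natAbs = Ideal.absNorm P) : P.IsPrincipal := by
  -- Some conjugate of `c` lies in `P`, since the product of all of them is `± N(P)`.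
  have hmem : ∏ s : Gal(K/ℚ), galRestrict ℤ ℚ K (𝓞 K) s c ∈ P := by
    have := Ideal.absNorm_mem P
    rw [prod_galRestrict_eq_norm_int]
    rcases Int.natAbs_eq (Algebra.norm ℤ c) with h | h <;> rw [h, hc] <;> simpa
  obtain ⟨s, -, hs⟩ := (Ideal.isPrime_of_prime hP).prod_mem_iff.1 hmem
  set c' := galRestrict ℤ ℚ K (𝓞 K) s c
  obtain ⟨J, hJ⟩ : P ∣ Ideal.span {c'} :=
    Ideal.dvd_iff_le.2 ((Ideal.span_singleton_le_iff_mem _).2 hs)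
  have hnorm : Ideal.absNorm P * Ideal.absNorm J = Ideal.absNorm P := by
    rw [← map_mul, ← hJ, Ideal.absNorm_span_singleton, Algebra.norm_eq_of_algEquiv, hc]
  have hJtop : J = ⊤ := Ideal.absNorm_eq_one_iff.1
    ((mul_eq_left₀ fun h ↦ hP.ne_zero (Ideal.absNorm_eq_zero_iff.1 h)).1 hnorm)
  rw [hJtop, Ideal.mul_top] at hJ
  exact ⟨c', hJ.symm⟩

/-- The image of the absolute norm is closed under division. -/
def NormClosedUnderDivision (K : Type*) [Field K] [NumberField K] : Prop :=
  ∀ a b : 𝓞 K, a ≠ 0 → b ≠ 0 →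
    (Algebra.norm ℤ a).natAbs ∣ (Algebra.norm ℤ b).natAbs →
    ∃ c : 𝓞 K, (Algebra.norm ℤ a).natAbs * (Algebra.norm ℤ c).natAbs = (Algebra.norm ℤ b).natAbs

namespace NormClosedUnderDivision

variable {σ τ : K →+* ℂ} (hdiv : NormClosedUnderDivision K) (h : IsEmbeddingPair σ τ)
include hdiv h

lemma exists_natAbs_norm_eq {b : 𝓞 K} {k : ℤ} {m : ℕ} (hk : k ≠ 0) (hm : m ≠ 0)
    (hb : (Algebra.norm ℤ b).natAbs = k.natAbs ^ 2 * m) :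
    ∃ c : 𝓞 K, (Algebra.norm ℤ c).natAbs = m := by
  have hk2 : k.natAbs ^ 2 ≠ 0 := pow_ne_zero 2 (Int.natAbs_ne_zero.2 hk)
  have hb0 : b ≠ 0 := by
    rintro rfl
    rw [Algebra.norm_zero] at hb
    exact mul_ne_zero hk2 hm hb.symm
  have hkn : (Algebra.norm ℤ (k : 𝓞 K)).natAbs = k.natAbs ^ 2 := by
    rw [h.norm_intCast, Int.natAbs_pow]
  obtain ⟨c, hc⟩ := hdiv k b (mod_cast hk) hb0 (by rw [hkn, hb]; exact dvd_mul_right _ _)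
  rw [hkn, hb] at hc
  exact ⟨c, mul_left_cancel₀ hk2 hc⟩

lemma exists_prime_norms :
    ∃ q : ℕ, q ≠ 0 ∧ ∀ p : ℕ, p.Prime → (p : ZMod q) = 1 →
      ∃ c : 𝓞 K, (Algebra.norm ℤ c).natAbs = p := by
  obtain ⟨d, θ, hsq, hd, hθ⟩ := h.exists_norm_eq_sq_sub_mul_sq
  have hd0 : d ≠ 0 := fun h0 ↦ hsq (h0 ▸ IsSquare.zero)
  refine ⟨4 * d.natAbs, by omega, fun p hp hmod ↦ ?_⟩
  have hmod' : p % (4 * d.natAbs) = 1 := by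
    have hmod1 := (ZMod.natCast_eq_natCast_iff' p 1 (4 * d.natAbs)).1 (mod_cast hmod)
    rwa [Nat.mod_eq_of_lt (show 1 < 4 * d.natAbs by omega)] at hmod1
  obtain ⟨x, y, k, hk, hxy⟩ := exists_sq_sub_mul_sq_eq_prime_mul_sq hp hsq hd hmod'
  refine hdiv.exists_natAbs_norm_eq h (b := x + y * θ) hk hp.ne_zero ?_
  rw [hθ, hxy, Int.natAbs_mul, Int.natAbs_pow, Int.natAbs_natCast, mul_comm]

lemma mk0_eq_one_of_prime_of_eq_sq {P : nonZeroDivisors (Ideal (𝓞 K))}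
    (hP : Prime (P : Ideal (𝓞 K))) {g : ClassGroup (𝓞 K)} (hg : ClassGroup.mk0 P = g ^ 2) :
    ClassGroup.mk0 P = 1 := by
  obtain ⟨I, hI⟩ := ClassGroup.mk0_surjective g⁻¹
  have hprinc {J : nonZeroDivisors (Ideal (𝓞 K))} (hJ : J = I ^ 2 * P) :
      (J : Ideal (𝓞 K)).IsPrincipal := by
    refine (ClassGroup.mk0_eq_one_iff J.2).1 ?_
    rw [hJ, map_mul, map_pow, hI, hg, inv_pow, inv_mul_cancel]
  obtain ⟨b, hb⟩ := (hprinc rfl).principal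
  have hbn : (Algebra.norm ℤ b).natAbs =
      (Ideal.absNorm (I : Ideal (𝓞 K)) : ℤ).natAbs ^ 2 * Ideal.absNorm (P : Ideal (𝓞 K)) := by
    rw [← Ideal.absNorm_span_singleton, ← Ideal.submodule_span_eq, ← hb]
    simp
  obtain ⟨c, hc⟩ := hdiv.exists_natAbs_norm_eq h
    (mod_cast Ideal.absNorm_ne_zero_of_nonZeroDivisors I)
    (Ideal.absNorm_ne_zero_of_nonZeroDivisors P) hbn
  have : Algebra.IsQuadraticExtension ℚ K := ⟨h.finrank_eq_two⟩
  exact (ClassGroup.mk0_eq_one_iff P.2).2 (isPrincipal_of_prime_of_natAbs_norm_eq hP hc)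

end NormClosedUnderDivision

end NormClosedUnderDivision

section Tent

/-- The tent function of height and half-width `L`. Its translates by the multiples of `L` add up
to a constant, which makes it a continuous substitute for a fundamental domain. -/
noncomputable def tent (L x : ℝ) : ℝ := max 0 (L - |x|)

lemma tent_nonneg (L x : ℝ) : 0 ≤ tent L x := le_max_left _ _

lemma tent_le {L : ℝ} (hL : 0 ≤ L) (x : ℝ) : tent L x ≤ L :=
  max_le hL (sub_le_self _ (abs_nonneg x))

lemma abs_lt_of_tent_ne_zero {L x : ℝ} (h : tent L x ≠ 0) : |x| < L := by
  by_contra! hx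
  exact h (max_eq_left (by linarith))

lemma abs_tent_sub_tent_le (L x y : ℝ) : |tent L x - tent L y| ≤ |x - y| := by
  unfold tent
  refine (abs_max_sub_max_le_max 0 (L - |x|) 0 (L - |y|)).trans (max_le (by simp) ?_)
  rw [sub_sub_sub_cancel_left, abs_sub_comm x y]
  exact abs_abs_sub_abs_le _ _

lemma tent_one_fract_add_intCast (x : ℝ) {n : ℤ} (h0 : n ≠ 0) (h1 : n ≠ -1) :
    tent 1 (Int.fract x + n) = 0 := by
  refine max_eq_left (sub_nonpos.2 (le_abs'.2 ?_))
  rcases lt_or_ge n 0 with hn | hn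
  · have hn2 : (n : ℝ) ≤ -2 := mod_cast (by omega : n ≤ -2)
    exact Or.inl (by linarith [Int.fract_lt_one x])
  · have hn1 : (1 : ℝ) ≤ n := mod_cast (by omega : 1 ≤ n)
    exact Or.inr (by linarith [Int.fract_nonneg x])

lemma hasSum_tent_one_fract_add_intCast (x : ℝ) :
    HasSum (fun n : ℤ ↦ tent 1 (Int.fract x + n)) 1 := by
  have hsupp : ∀ n ∉ ({0, -1} : Finset ℤ), tent 1 (Int.fract x + n) = 0 := fun n hn ↦ by
    simp only [Finset.mem_insert, Finset.mem_singleton, not_or] at hn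
    exact tent_one_fract_add_intCast x hn.1 hn.2
  have h0 := Int.fract_nonneg x
  have h1 := Int.fract_lt_one x
  have hsum : ∑ n ∈ ({0, -1} : Finset ℤ), tent 1 (Int.fract x + n) = 1 := by
    rw [Finset.sum_pair (by simp), tent, tent, Int.cast_zero, add_zero, abs_of_nonneg h0,
      max_eq_right (by linarith), Int.cast_neg, Int.cast_one, abs_of_neg (by linarith),
      max_eq_right (by linarith)]
    ring
  simpa only [hsum] using hasSum_sum_of_ne_finset_zero hsupp

lemma tent_abs_mul (b x : ℝ) : tent |b| (x * b) = |b| * tent 1 x := by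
  rw [tent, tent, abs_mul, mul_max_of_nonneg _ _ (abs_nonneg b), mul_zero, mul_sub, mul_one,
    mul_comm |x|]

lemma hasSum_tent_add_zsmul {b : ℝ} (hb : b ≠ 0) (x : ℝ) :
    HasSum (fun n : ℤ ↦ tent |b| (x + n • b)) |b| := by
  have h : HasSum (fun n : ℤ ↦ tent |b| (x + (n - ⌊x / b⌋) • b)) |b| := by
    convert! (hasSum_tent_one_fract_add_intCast (x / b)).mul_left |b| using 1
    · funext n
      rw [← tent_abs_mul, Int.fract, zsmul_eq_mul]
      push_cast
      congr 1
      field_simp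
      ring
    · rw [mul_one]
  exact (Equiv.subRight ⌊x / b⌋).hasSum_iff.1 h

/-- The weight `(x y)⁻ˢ` restricted to a neighbourhood of the diagonal `x = y`, of logarithmic
width `L`. -/
noncomputable def diagWeight (L s x y : ℝ) : ℝ :=
  tent L (Real.log x - Real.log y) * (x * y) ^ (-s)

lemma diagWeight_nonneg (L s : ℝ) {x y : ℝ} (hx : 0 ≤ x) (hy : 0 ≤ y) :
    0 ≤ diagWeight L s x y :=
  mul_nonneg (tent_nonneg _ _) (Real.rpow_nonneg (mul_nonneg hx hy) _)

lemma diagWeight_le {L s x y : ℝ} (hL : 0 ≤ L) (hs : 0 ≤ s) (h : 1 ≤ x * y) :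
    diagWeight L s x y ≤ L :=
  (mul_le_mul (tent_le hL _) (Real.rpow_le_one_of_one_le_of_nonpos h (neg_nonpos.2 hs))
    (Real.rpow_nonneg (by linarith) _) hL).trans (mul_one L).le

lemma exp_mul_max_le_min_of_diagWeight_ne_zero {L s x y : ℝ} (hL : 0 ≤ L) (hx : 0 < x)
    (hy : 0 < y) (h : diagWeight L s x y ≠ 0) : Real.exp (-L) * max x y ≤ min x y := by
  have hlt := abs_lt.1 (abs_lt_of_tent_ne_zero (left_ne_zero_of_mul h))
  have key {u v : ℝ} (hu : 0 < u) (hv : 0 < v) (huv : Real.log u - Real.log v < L) :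
      Real.exp (-L) * u ≤ v := by
    calc Real.exp (-L) * u = Real.exp (-L + Real.log u) := by rw [Real.exp_add, Real.exp_log hu]
      _ ≤ Real.exp (Real.log v) := Real.exp_le_exp.2 (by linarith)
      _ = v := Real.exp_log hv
  have hexp : Real.exp (-L) ≤ 1 := Real.exp_le_one_iff.2 (neg_nonpos.2 hL)
  rw [mul_max_of_nonneg _ _ (Real.exp_pos _).le]
  exact le_min (max_le (mul_le_of_le_one_left hx.le hexp) (key hy hx (by linarith)))
    (max_le (key hx hy hlt.2) (mul_le_of_le_one_left hy.le hexp))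

lemma diagWeight_le_rpow_max {L s x y : ℝ} (hL : 0 ≤ L) (hs : 0 ≤ s) (hx : 0 < x) (hy : 0 < y) :
    diagWeight L s x y ≤ L * Real.exp (-L) ^ (-(2 * s)) * max x y ^ (-(2 * s)) := by
  have hM : 0 < max x y := lt_max_of_lt_left hx
  by_cases h : diagWeight L s x y = 0
  · rw [h]
    positivity
  obtain ⟨h1, h2⟩ := le_min_iff.1 (exp_mul_max_le_min_of_diagWeight_ne_zero hL hx hy h)
  rw [mul_assoc, ← Real.mul_rpow (Real.exp_pos _).le hM.le]
  refine mul_le_mul (tent_le hL _) ?_ (by positivity) hL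
  rw [neg_mul_eq_mul_neg, Real.rpow_mul (by positivity), Real.rpow_two, sq]
  exact Real.rpow_le_rpow_of_nonpos (by positivity) (mul_le_mul h1 h2 (by positivity) hx.le)
    (by linarith)

lemma abs_log_sub_log_le {m x y : ℝ} (hm : 0 < m) (hx : m ≤ x) (hy : m ≤ y) :
    |Real.log x - Real.log y| ≤ |x - y| / m := by
  have key {u v : ℝ} (hu : m ≤ u) (hv : m ≤ v) :
      Real.log u - Real.log v ≤ |u - v| / m := by
    have hu0 : 0 < u := hm.trans_le hu
    have hv0 : 0 < v := hm.trans_le hv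
    rw [← Real.log_div hu0.ne' hv0.ne']
    calc Real.log (u / v) ≤ u / v - 1 := Real.log_le_sub_one_of_pos (by positivity)
      _ = (u - v) / v := by field_simp
      _ ≤ |u - v| / v := by gcongr; exact le_abs_self _
      _ ≤ |u - v| / m := by gcongr
  exact abs_le'.2 ⟨key hx hy, by rw [neg_sub, abs_sub_comm x y]; exact key hy hx⟩

lemma abs_rpow_neg_sub_rpow_neg_le {m s x y : ℝ} (hm : 0 < m) (hs : 0 ≤ s) (hx : m ≤ x)
    (hy : m ≤ y) :
    |x ^ (-s) - y ^ (-s)| ≤ s * |Real.log x - Real.log y| * m ^ (-s) := by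
  have key {u v : ℝ} (hu : m ≤ u) (hv : m ≤ v) :
      u ^ (-s) - v ^ (-s) ≤ s * |Real.log u - Real.log v| * m ^ (-s) := by
    have hu0 : 0 < u := hm.trans_le hu
    have hv0 : 0 < v := hm.trans_le hv
    have hvu : v ^ (-s) = u ^ (-s) * Real.exp (s * (Real.log u - Real.log v)) := by
      rw [Real.rpow_def_of_pos hu0, Real.rpow_def_of_pos hv0, ← Real.exp_add]
      congr 1
      ring
    calc u ^ (-s) - v ^ (-s)
        = (1 - Real.exp (s * (Real.log u - Real.log v))) * u ^ (-s) := by rw [hvu]; ring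
      _ ≤ s * |Real.log u - Real.log v| * u ^ (-s) := by
          gcongr
          have := Real.add_one_le_exp (s * (Real.log u - Real.log v))
          have := mul_le_mul_of_nonneg_left (neg_abs_le (Real.log u - Real.log v)) hs
          linarith
      _ ≤ s * |Real.log u - Real.log v| * m ^ (-s) := by
          refine mul_le_mul_of_nonneg_left ?_ (by positivity)
          exact Real.rpow_le_rpow_of_nonpos hm hu (by linarith)
  exact abs_le'.2 ⟨key hx hy, by rw [neg_sub, abs_sub_comm (Real.log x)]; exact key hy hx⟩

lemma abs_diagWeight_sub_le_of_abs_log_sub_le {L ε m s x y x' y' : ℝ} (hL : 0 ≤ L) (hm : 0 < m)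
    (hs : 0 ≤ s) (hx : m ≤ x) (hy : m ≤ y) (hx' : m ≤ x') (hy' : m ≤ y')
    (hxx : |Real.log x - Real.log x'| ≤ ε) (hyy : |Real.log y - Real.log y'| ≤ ε) :
    |diagWeight L s x y - diagWeight L s x' y'| ≤ (2 + 2 * s * L) * ε * (m * m) ^ (-s) := by
  have hε : 0 ≤ ε := (abs_nonneg _).trans hxx
  have hmm : 0 < m * m := mul_pos hm hm
  have hxy : m * m ≤ x * y := mul_le_mul hx hy hm.le (hm.le.trans hx)
  have hxy' : m * m ≤ x' * y' := mul_le_mul hx' hy' hm.le (hm.le.trans hx')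
  set w := tent L (Real.log x - Real.log y) with hw
  set w' := tent L (Real.log x' - Real.log y') with hw'
  have hww : |w - w'| ≤ 2 * ε := by
    refine (abs_tent_sub_tent_le _ _ _).trans ?_
    rw [sub_sub_sub_comm]
    exact (abs_sub _ _).trans (by linarith)
  have hlog : |Real.log (x * y) - Real.log (x' * y')| ≤ 2 * ε := by
    rw [Real.log_mul (by linarith) (by linarith), Real.log_mul (by linarith) (by linarith),
      add_sub_add_comm]
    exact (abs_add_le _ _).trans (by linarith)
  have hpow : |(x * y) ^ (-s) - (x' * y') ^ (-s)| ≤ s * (2 * ε) * (m * m) ^ (-s) := by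
    refine (abs_rpow_neg_sub_rpow_neg_le hmm hs hxy hxy').trans ?_
    gcongr
  have hle : |(x * y) ^ (-s)| ≤ (m * m) ^ (-s) := by
    rw [abs_of_nonneg (Real.rpow_nonneg (hmm.le.trans hxy) _)]
    exact Real.rpow_le_rpow_of_nonpos hmm hxy (by linarith)
  have hw'L : |w'| ≤ L := by
    rw [abs_of_nonneg (tent_nonneg _ _)]
    exact tent_le hL _
  calc |diagWeight L s x y - diagWeight L s x' y'|
      = |(w - w') * (x * y) ^ (-s) + w' * ((x * y) ^ (-s) - (x' * y') ^ (-s))| := by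
        rw [diagWeight, diagWeight, ← hw, ← hw']
        congr 1
        ring
    _ ≤ |w - w'| * |(x * y) ^ (-s)| + |w'| * |(x * y) ^ (-s) - (x' * y') ^ (-s)| := by
        rw [← abs_mul, ← abs_mul]
        exact abs_add_le _ _
    _ ≤ 2 * ε * (m * m) ^ (-s) + L * (s * (2 * ε) * (m * m) ^ (-s)) := by gcongr
    _ = (2 + 2 * s * L) * ε * (m * m) ^ (-s) := by ring

lemma abs_diagWeight_sub_le_of_le {L ρ m s x y x' y' : ℝ} (hL : 0 ≤ L) (hm : 1 ≤ m)
    (hs : s ∈ Set.Ioc (1 : ℝ) 2) (hx : m ≤ x) (hy : m ≤ y) (hx' : m ≤ x') (hy' : m ≤ y')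
    (hxx : |x - x'| ≤ ρ) (hyy : |y - y'| ≤ ρ) :
    |diagWeight L s x y - diagWeight L s x' y'| ≤ (2 + 4 * L) * ρ * m⁻¹ ^ 3 := by
  have hm0 : 0 < m := one_pos.trans_le hm
  have hρ : 0 ≤ ρ := (abs_nonneg _).trans hxx
  have hmm : (m * m) ^ (-s) ≤ (m * m) ^ (-1 : ℝ) :=
    Real.rpow_le_rpow_of_exponent_le (one_le_mul_of_one_le_of_one_le hm hm) (by linarith [hs.1])
  calc |diagWeight L s x y - diagWeight L s x' y'|
      ≤ (2 + 2 * s * L) * (ρ / m) * (m * m) ^ (-s) :=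
        abs_diagWeight_sub_le_of_abs_log_sub_le hL hm0 (by linarith [hs.1]) hx hy hx' hy'
          ((abs_log_sub_log_le hm0 hx hx').trans (by gcongr))
          ((abs_log_sub_log_le hm0 hy hy').trans (by gcongr))
    _ ≤ (2 + 2 * 2 * L) * (ρ / m) * (m * m) ^ (-1 : ℝ) := by
        gcongr
        exact hs.2
    _ = (2 + 4 * L) * ρ * m⁻¹ ^ 3 := by
        rw [Real.rpow_neg_one]
        field_simp
        ring

lemma exp_mul_max_sub_le_of_diagWeight_ne_zero {L ρ s x y x' y' : ℝ} (hL : 0 ≤ L) (hx : 0 < x)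
    (hy : 0 < y) (hx' : 0 < x') (hy' : 0 < y') (hxx : |x - x'| ≤ ρ) (hyy : |y - y'| ≤ ρ)
    (h : diagWeight L s x y ≠ 0 ∨ diagWeight L s x' y' ≠ 0) :
    Real.exp (-L) * max x y - 2 * ρ ≤ min (min x y) (min x' y') := by
  have hρ : 0 ≤ ρ := (abs_nonneg _).trans hxx
  have hx1 := abs_le.1 hxx
  have hy1 := abs_le.1 hyy
  simp only [le_min_iff]
  rcases h with h | h
  · obtain ⟨h1, h2⟩ := le_min_iff.1 (exp_mul_max_le_min_of_diagWeight_ne_zero hL hx hy h)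
    refine ⟨⟨?_, ?_⟩, ?_, ?_⟩ <;> linarith
  · obtain ⟨h1, h2⟩ := le_min_iff.1 (exp_mul_max_le_min_of_diagWeight_ne_zero hL hx' hy' h)
    have hmax : max x y ≤ max x' y' + ρ :=
      max_le (by linarith [le_max_left x' y']) (by linarith [le_max_right x' y'])
    have hexp : Real.exp (-L) * max x y ≤ Real.exp (-L) * max x' y' + ρ :=
      calc Real.exp (-L) * max x y ≤ Real.exp (-L) * max x' y' + Real.exp (-L) * ρ := by
            rw [← mul_add]
            gcongr
        _ ≤ Real.exp (-L) * max x' y' + ρ := by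
            gcongr
            exact mul_le_of_le_one_left hρ (Real.exp_le_one_iff.2 (neg_nonpos.2 hL))
    refine ⟨⟨?_, ?_⟩, ?_, ?_⟩ <;> linarith

lemma exists_abs_diagWeight_sub_le {L ρ : ℝ} (hL : 0 ≤ L) (hρ : 0 ≤ ρ) :
    ∃ C : ℝ, 0 ≤ C ∧ ∀ s ∈ Set.Ioc (1 : ℝ) 2, ∀ x y x' y' : ℝ, 0 < x → 0 < y → 0 < x' → 0 < y' →
      1 ≤ x * y → 1 ≤ x' * y' → |x - x'| ≤ ρ → |y - y'| ≤ ρ →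
      |diagWeight L s x y - diagWeight L s x' y'| ≤ C * (max x y)⁻¹ ^ 3 := by
  set k := Real.exp (-L)
  have hk : 0 < k := Real.exp_pos _
  refine ⟨max (L * ((4 * ρ + 2) / k) ^ 3) ((2 + 4 * L) * ρ * (2 / k) ^ 3),
    le_max_of_le_left (by positivity), fun s hs x y x' y' hx hy hx' hy' hxy hxy' hxx hyy ↦ ?_⟩
  have hs0 : 0 ≤ s := by linarith [hs.1]
  set M := max x y
  have hM : 0 < M := lt_max_of_lt_left hx
  rcases le_or_gt (k * M) (4 * ρ + 2) with hsmall | hlarge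
  · refine le_trans ?_ (mul_le_mul_of_nonneg_right (le_max_left _ _) (by positivity))
    calc |diagWeight L s x y - diagWeight L s x' y'| ≤ L :=
          abs_sub_le_of_nonneg_of_le (diagWeight_nonneg _ _ hx.le hy.le) (diagWeight_le hL hs0 hxy)
            (diagWeight_nonneg _ _ hx'.le hy'.le) (diagWeight_le hL hs0 hxy')
      _ ≤ L * ((4 * ρ + 2) / (k * M)) ^ 3 :=
          le_mul_of_one_le_right hL (one_le_pow₀ ((one_le_div (by positivity)).2 hsmall))
      _ = L * ((4 * ρ + 2) / k) ^ 3 * M⁻¹ ^ 3 := by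
          field_simp
  · refine le_trans ?_ (mul_le_mul_of_nonneg_right (le_max_right _ _) (by positivity))
    by_cases h0 : diagWeight L s x y = 0 ∧ diagWeight L s x' y' = 0
    · rw [h0.1, h0.2, sub_zero, abs_zero]
      positivity
    have hmin := (exp_mul_max_sub_le_of_diagWeight_ne_zero hL hx hy hx' hy' hxx hyy
      (not_and_or.1 h0)).trans' (show k * M / 2 ≤ k * M - 2 * ρ by linarith)
    simp only [le_min_iff] at hmin
    refine (abs_diagWeight_sub_le_of_le hL (by linarith) hs hmin.1.1 hmin.1.2 hmin.2.1
      hmin.2.2 hxx hyy).trans (le_of_eq ?_)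
    field_simp

end Tent

section UnitSum

lemma exists_range_eq_zmultiples {G : Type*} [AddGroup G] {f : G →+ ℝ}
    (hfin : {u | |f u| ≤ 1}.Finite) : ∃ b : ℝ, f.range = AddSubgroup.zmultiples b := by
  simp only [AddSubgroup.zmultiples_eq_closure]
  refine f.range.dense_or_cyclic.resolve_left fun hdense ↦ ?_
  obtain ⟨_, hx, ⟨u, rfl⟩, hu⟩ := (hdense.sdiff_finite (hfin.image f)).inter_open_nonempty
    (Set.Ioo (-1) 1) isOpen_Ioo ⟨0, by norm_num⟩
  exact hu ⟨u, (abs_lt.2 hx).le, rfl⟩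

lemma bijective_ker_add_zsmul {G : Type*} [AddCommGroup G] {f : G →+ ℝ} {g : G} (hg : f g ≠ 0)
    (hrange : f.range = AddSubgroup.zmultiples (f g)) :
    Function.Bijective fun p : f.ker × ℤ ↦ (p.1 : G) + p.2 • g := by
  have hf (p : f.ker × ℤ) : f (p.1 + p.2 • g) = p.2 * f g := by
    rw [map_add, map_zsmul, f.mem_ker.1 p.1.2, zero_add, zsmul_eq_mul]
  refine ⟨fun p q hpq ↦ ?_, fun u ↦ ?_⟩
  · have h2 : p.2 = q.2 := by
      have := congr_arg f hpq
      rw [hf, hf] at this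
      exact_mod_cast mul_right_cancel₀ hg this
    dsimp only at hpq
    rw [h2] at hpq
    exact Prod.ext (Subtype.ext (add_right_cancel hpq)) h2
  · obtain ⟨n, hn⟩ : f u ∈ AddSubgroup.zmultiples (f g) := hrange ▸ ⟨u, rfl⟩
    refine ⟨(⟨u - n • g, ?_⟩, n), sub_add_cancel u (n • g)⟩
    rw [AddMonoidHom.mem_ker, map_sub, map_zsmul, sub_eq_zero]
    exact hn.symm

lemma exists_hasSum_tent_add_apply {G : Type*} [AddCommGroup G] {f : G →+ ℝ} (hf : f ≠ 0)
    (hfin : {u | |f u| ≤ 1}.Finite) :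
    ∃ L > (0 : ℝ), ∃ c > (0 : ℝ), ∀ x : ℝ, HasSum (fun u ↦ tent L (x + f u)) c := by
  obtain ⟨b, hb⟩ := exists_range_eq_zmultiples hfin
  obtain ⟨g, rfl⟩ : b ∈ f.range := hb ▸ AddSubgroup.mem_zmultiples b
  have hg : f g ≠ 0 := fun h0 ↦ hf <| by
    rwa [h0, AddSubgroup.zmultiples_zero_eq_bot, AddMonoidHom.range_eq_bot_iff] at hb
  have hker : Finite f.ker := (hfin.subset fun u hu ↦ by
    rw [Set.mem_ofPred_eq, f.mem_ker.1 hu, abs_zero]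
    exact zero_le_one).to_subtype
  have := Fintype.ofFinite f.ker
  refine ⟨|f g|, abs_pos.2 hg, Fintype.card f.ker * |f g|,
    mul_pos (mod_cast Fintype.card_pos) (abs_pos.2 hg), fun x ↦ ?_⟩
  rw [← (Equiv.ofBijective _ (bijective_ker_add_zsmul hg hb)).hasSum_iff]
  have hone : HasSum (fun _ : f.ker ↦ (1 : ℝ)) (Fintype.card f.ker) := by
    simpa using hasSum_fintype fun _ : f.ker ↦ (1 : ℝ)
  have htent := hasSum_tent_add_zsmul hg x
  convert! hone.mul htent (hone.summable.mul_of_nonneg htent.summable (fun _ ↦ zero_le_one)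
    fun _ ↦ tent_nonneg _ _) using 2 with p
  simp only [Function.comp_apply, Equiv.ofBijective_apply, map_add, map_zsmul,
    f.mem_ker.1 p.1.2, zero_add, one_mul]

variable {K : Type*} [Field K] {σ τ : K →+* ℂ}

lemma norm_embedding_pos (σ : K →+* ℂ) {a : 𝓞 K} (ha : a ≠ 0) : 0 < ‖σ a‖ :=
  norm_pos_iff.2 ((map_ne_zero σ).2 (RingOfIntegers.coe_ne_zero_iff.2 ha))

lemma log_norm_mul_sub_log_norm_mul {a b : 𝓞 K} (ha : a ≠ 0) (hb : b ≠ 0) :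
    Real.log ‖σ (a * b : 𝓞 K)‖ - Real.log ‖τ (a * b : 𝓞 K)‖ =
      (Real.log ‖σ a‖ - Real.log ‖τ a‖) + (Real.log ‖σ b‖ - Real.log ‖τ b‖) := by
  simp only [map_mul, norm_mul]
  rw [Real.log_mul (norm_embedding_pos σ ha).ne' (norm_embedding_pos σ hb).ne',
    Real.log_mul (norm_embedding_pos τ ha).ne' (norm_embedding_pos τ hb).ne']
  ring

/-- The homomorphism `u ↦ log |σ u| - log |τ u|` on units; in the real quadratic case it is, up to
a factor, Dirichlet's logarithmic embedding. -/
noncomputable def unitLog (σ τ : K →+* ℂ) : Additive (𝓞 K)ˣ →+ ℝ where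
  toFun u := Real.log ‖σ (u.toMul : 𝓞 K)‖ - Real.log ‖τ (u.toMul : 𝓞 K)‖
  map_zero' := by simp
  map_add' u v := log_norm_mul_sub_log_norm_mul u.toMul.ne_zero v.toMul.ne_zero

variable [NumberField K]

namespace IsEmbeddingPair

variable (h : IsEmbeddingPair σ τ)
include h

lemma one_le_norm_mul_norm {a : 𝓞 K} (ha : a ≠ 0) : 1 ≤ ‖σ a‖ * ‖τ a‖ := by
  rw [← h.natAbs_norm_eq]
  exact_mod_cast Nat.one_le_iff_ne_zero.2 (Int.natAbs_ne_zero.2 (Algebra.norm_ne_zero_iff.2 ha))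

lemma one_le_max_norm {a : 𝓞 K} (ha : a ≠ 0) : 1 ≤ max ‖σ a‖ ‖τ a‖ := by
  by_contra! hlt
  obtain ⟨hσ, hτ⟩ := max_lt_iff.1 hlt
  nlinarith [norm_nonneg (σ a), norm_nonneg (τ a), h.one_le_norm_mul_norm ha]

lemma summable_max_norm_rpow {r : ℝ} (hr : 2 < r) :
    Summable fun a : 𝓞 K ↦ max ‖σ a‖ ‖τ a‖ ^ (-r) := by
  let ι : 𝓞 K →+ ℂ × ℂ := ((σ.prod τ).comp (algebraMap (𝓞 K) K)).toAddMonoidHom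
  have hinj : Function.Injective ι := fun a b hab ↦
    RingOfIntegers.coe_injective (σ.injective (congr_arg Prod.fst hab))
  let Λ : Submodule ℤ (ℂ × ℂ) := LinearMap.range ι.toIntLinearMap
  let e : 𝓞 K ≃ₗ[ℤ] Λ := LinearEquiv.ofInjective ι.toIntLinearMap hinj
  have he (a : 𝓞 K) : ‖e a‖ = max ‖σ a‖ ‖τ a‖ := rfl
  have hdisc : DiscreteTopology Λ := by
    refine DiscreteTopology.of_forall_le_norm zero_lt_one fun x hx ↦ ?_
    obtain ⟨a, rfl⟩ := e.surjective x
    rw [he]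
    exact h.one_le_max_norm fun h0 ↦ hx (by rw [h0, map_zero])
  have hrank : Module.finrank ℤ Λ = 2 := by
    rw [← e.finrank_eq, RingOfIntegers.rank, h.finrank_eq_two]
  have hsum := ZLattice.summable_norm_rpow Λ (-r) (by rw [hrank]; push_cast; linarith)
  exact e.toEquiv.summable_iff.2 hsum

lemma norm_mul_norm_unit (u : (𝓞 K)ˣ) : ‖σ (u : 𝓞 K)‖ * ‖τ (u : 𝓞 K)‖ = 1 := by
  rw [← h.natAbs_norm_eq, Int.natAbs_of_isUnit (u.isUnit.map _), Nat.cast_one]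

lemma log_norm_add_log_norm_unit (u : (𝓞 K)ˣ) :
    Real.log ‖σ (u : 𝓞 K)‖ + Real.log ‖τ (u : 𝓞 K)‖ = 0 := by
  rw [← Real.log_mul (norm_embedding_pos σ u.ne_zero).ne' (norm_embedding_pos τ u.ne_zero).ne',
    h.norm_mul_norm_unit, Real.log_one]

lemma finite_setOf_abs_unitLog_le (R : ℝ) : {u | |unitLog σ τ u| ≤ R}.Finite := by
  let ι (u : Additive (𝓞 K)ˣ) : K := (u.toMul : 𝓞 K)
  have hι : Function.Injective ι :=
    (RingOfIntegers.coe_injective.comp Units.val_injective).comp Additive.toMul.injective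
  refine ((Embeddings.finite_of_norm_le K ℂ (Real.exp R)).preimage hι.injOn).subset
    fun u hu ↦ ⟨RingOfIntegers.isIntegral_coe _, fun φ ↦ ?_⟩
  have hsum := h.log_norm_add_log_norm_unit u.toMul
  have hdiff : |Real.log ‖σ (u.toMul : 𝓞 K)‖ - Real.log ‖τ (u.toMul : 𝓞 K)‖| ≤ R := hu
  have hle := abs_le.1 hdiff
  have hR : 0 ≤ R := (abs_nonneg _).trans hdiff
  refine (Real.log_le_iff_le_exp (norm_embedding_pos φ u.toMul.ne_zero)).1 ?_
  rcases h.eq_or_eq φ with rfl | rfl <;> linarith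

lemma unitLog_ne_zero (hplace : InfinitePlace.mk σ ≠ InfinitePlace.mk τ) : unitLog σ τ ≠ 0 := by
  intro h0
  obtain ⟨u, hu⟩ := Units.dirichletUnitTheorem.exists_unit K (InfinitePlace.mk σ)
  have hτ : Real.log ‖τ (u : 𝓞 K)‖ < 0 := hu (InfinitePlace.mk τ) hplace.symm
  have hdiff : Real.log ‖σ (u : 𝓞 K)‖ - Real.log ‖τ (u : 𝓞 K)‖ = 0 :=
    DFunLike.congr_fun h0 (Additive.ofMul u)
  linarith [h.log_norm_add_log_norm_unit u]

lemma exists_hasSum_tent_of_mk_eq (hplace : InfinitePlace.mk σ = InfinitePlace.mk τ) :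
    ∃ L > (0 : ℝ), ∃ c > (0 : ℝ), ∀ a : 𝓞 K, a ≠ 0 → HasSum (fun u : (𝓞 K)ˣ ↦
      tent L (Real.log ‖σ (u * a : 𝓞 K)‖ - Real.log ‖τ (u * a : 𝓞 K)‖)) c := by
  have heq (x : K) : ‖σ x‖ = ‖τ x‖ := DFunLike.congr_fun hplace x
  have hfin : Finite (𝓞 K)ˣ := Set.finite_univ_iff.1 <|
    (h.finite_setOf_abs_unitLog_le 0).subset fun u _ ↦ (abs_eq_zero.2 (sub_eq_zero.2
      (congr_arg Real.log (heq (u.toMul : 𝓞 K))))).le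
  have := Fintype.ofFinite (𝓞 K)ˣ
  refine ⟨1, one_pos, Fintype.card (𝓞 K)ˣ, mod_cast Fintype.card_pos, fun a _ ↦ ?_⟩
  simpa [heq, tent] using hasSum_fintype fun _ : (𝓞 K)ˣ ↦ (1 : ℝ)

lemma exists_hasSum_tent :
    ∃ L > (0 : ℝ), ∃ c > (0 : ℝ), ∀ a : 𝓞 K, a ≠ 0 → HasSum (fun u : (𝓞 K)ˣ ↦
      tent L (Real.log ‖σ (u * a : 𝓞 K)‖ - Real.log ‖τ (u * a : 𝓞 K)‖)) c := by
  by_cases hplace : InfinitePlace.mk σ = InfinitePlace.mk τ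
  · exact h.exists_hasSum_tent_of_mk_eq hplace
  obtain ⟨L, hL, c, hc, hsum⟩ :=
    exists_hasSum_tent_add_apply (h.unitLog_ne_zero hplace) (h.finite_setOf_abs_unitLog_le 1)
  refine ⟨L, hL, c, hc, fun a ha ↦ ?_⟩
  refine (Additive.ofMul.hasSum_iff.2 (hsum (Real.log ‖σ a‖ - Real.log ‖τ a‖))).congr_fun
    fun u ↦ ?_
  rw [log_norm_mul_sub_log_norm_mul u.ne_zero ha, add_comm]
  rfl

end IsEmbeddingPair

end UnitSum

section CosetSum

variable {G : Type*} [AddCommGroup G] (S : AddSubgroup G)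

lemma bijective_quotientOut_add :
    Function.Bijective fun p : (G ⧸ S) × S ↦ Quotient.out p.1 + (p.2 : G) := by
  have hmk (p : (G ⧸ S) × S) : ((Quotient.out p.1 + (p.2 : G) : G) : G ⧸ S) = p.1 := by
    rw [QuotientAddGroup.mk_add, QuotientAddGroup.out_eq',
      (QuotientAddGroup.eq_zero_iff _).2 p.2.2, add_zero]
  refine ⟨fun p q hpq ↦ ?_, fun a ↦ ⟨(a, ⟨-Quotient.out (a : G ⧸ S) + a, ?_⟩), ?_⟩⟩
  · have h1 : p.1 = q.1 := by
      rw [← hmk p, ← hmk q]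
      exact congr_arg _ hpq
    dsimp only at hpq
    rw [h1] at hpq
    exact Prod.ext h1 (Subtype.ext (add_left_cancel hpq))
  · rw [← QuotientAddGroup.eq, QuotientAddGroup.out_eq']
  · exact add_neg_cancel_left _ _

lemma tsum_eq_tsum_quotient_tsum_add {f : G → ℝ} (hf : Summable f) :
    ∑' a, f a = ∑' q : G ⧸ S, ∑' b : S, f (Quotient.out q + b) := by
  have hbij := bijective_quotientOut_add S
  rw [← (Equiv.ofBijective _ hbij).tsum_eq f]
  exact (hf.comp_injective hbij.injective).tsum_prod

lemma abs_tsum_sub_index_mul_tsum_le [S.FiniteIndex] {f : G → ℝ} {H : G → G → ℝ}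
    (hf : Summable f) (hH : ∀ r, Summable (H r)) (hle : ∀ r b, |f (r + b) - f b| ≤ H r b) :
    |∑' a, f a - S.index * ∑' b : S, f b| ≤ ∑' q : G ⧸ S, ∑' b : S, H (Quotient.out q) b := by
  have := Fintype.ofFinite (G ⧸ S)
  have hindex : (S.index : ℝ) = ∑ _q : G ⧸ S, (1 : ℝ) := by
    rw [AddSubgroup.index, Nat.card_eq_fintype_card]
    simp
  have hcoset (r : G) : Summable fun b : S ↦ f (r + b) :=
    hf.comp_injective ((add_right_injective r).comp Subtype.val_injective)
  rw [tsum_eq_tsum_quotient_tsum_add S hf, hindex, tsum_fintype (β := G ⧸ S),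
    tsum_fintype (β := G ⧸ S), Finset.sum_mul, ← Finset.sum_sub_distrib]
  refine (Finset.abs_sum_le_sum_abs _ _).trans (Finset.sum_le_sum fun q _ ↦ ?_)
  have hS : Summable fun b : S ↦ f b := hf.comp_injective Subtype.val_injective
  rw [one_mul, ← (hcoset _).tsum_sub hS]
  have hHS : Summable fun b : S ↦ H (Quotient.out q) b :=
    (hH _).comp_injective Subtype.val_injective
  exact tsum_of_norm_bounded (f := fun b : S ↦ f (Quotient.out q + b) - f b) hHS.hasSum
    fun b ↦ hle _ b

end CosetSum

section IntWeight

variable {K : Type*} [Field K] {σ τ : K →+* ℂ}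

/-- The weight `diagWeight` at the absolute values `|σ a|` and `|τ a|`. Up to the factor `tent`, it
is `|N(a)|⁻ˢ` when `σ` and `τ` are the two embeddings. -/
noncomputable def intWeight (σ τ : K →+* ℂ) (L s : ℝ) (a : 𝓞 K) : ℝ :=
  diagWeight L s ‖σ a‖ ‖τ a‖

lemma intWeight_nonneg (L s : ℝ) (a : 𝓞 K) : 0 ≤ intWeight σ τ L s a :=
  diagWeight_nonneg _ _ (norm_nonneg _) (norm_nonneg _)

lemma intWeight_zero (L : ℝ) {s : ℝ} (hs : 0 < s) : intWeight σ τ L s 0 = 0 := by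
  simp [intWeight, diagWeight, Real.zero_rpow (neg_ne_zero.2 hs.ne')]

variable [NumberField K]

namespace IsEmbeddingPair

variable (h : IsEmbeddingPair σ τ) {L : ℝ}
include h

lemma intWeight_le (hL : 0 ≤ L) {s : ℝ} (hs : 0 < s) (a : 𝓞 K) : intWeight σ τ L s a ≤ L := by
  rcases eq_or_ne a 0 with rfl | ha
  · rwa [intWeight_zero L hs]
  · exact diagWeight_le hL hs.le (h.one_le_norm_mul_norm ha)

lemma summable_intWeight (hL : 0 ≤ L) {s : ℝ} (hs : 1 < s) : Summable (intWeight σ τ L s) := by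
  refine .of_nonneg_of_le (intWeight_nonneg L s) (fun a ↦ ?_)
    ((h.summable_max_norm_rpow (r := 2 * s) (by linarith)).mul_left
      (L * Real.exp (-L) ^ (-(2 * s))))
  rcases eq_or_ne a 0 with rfl | ha
  · rw [intWeight_zero L (by linarith)]
    positivity
  · exact diagWeight_le_rpow_max hL (by linarith) (norm_embedding_pos σ ha)
      (norm_embedding_pos τ ha)

lemma exists_abs_intWeight_add_sub_le (hL : 0 ≤ L) (r : 𝓞 K) :
    ∃ C : ℝ, 0 ≤ C ∧ ∀ s ∈ Set.Ioc (1 : ℝ) 2, ∀ b : 𝓞 K, b ≠ 0 → r + b ≠ 0 →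
      |intWeight σ τ L s (r + b) - intWeight σ τ L s b| ≤ C * max ‖σ b‖ ‖τ b‖ ^ (-3 : ℝ) := by
  obtain ⟨C, hC, hle⟩ := exists_abs_diagWeight_sub_le (ρ := max ‖σ r‖ ‖τ r‖) hL
    (le_max_of_le_left (norm_nonneg _))
  refine ⟨C, hC, fun s hs b hb hrb ↦ ?_⟩
  have hnorm (φ : K →+* ℂ) : |‖φ b‖ - ‖φ (r + b : 𝓞 K)‖| ≤ ‖φ r‖ := by
    refine (abs_norm_sub_norm_le _ _).trans (le_of_eq ?_)
    simp
  rw [abs_sub_comm, Real.rpow_neg (le_max_of_le_left (norm_nonneg _)),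
    show (3 : ℝ) = (3 : ℕ) by norm_num, Real.rpow_natCast, ← inv_pow]
  exact hle s hs _ _ _ _ (norm_embedding_pos σ hb) (norm_embedding_pos τ hb)
    (norm_embedding_pos σ hrb) (norm_embedding_pos τ hrb)
    (h.one_le_norm_mul_norm hb) (h.one_le_norm_mul_norm hrb)
    ((hnorm σ).trans (le_max_left _ _)) ((hnorm τ).trans (le_max_right _ _))

lemma exists_summable_abs_intWeight_add_sub_le (hL : 0 ≤ L) (r : 𝓞 K) :
    ∃ H : 𝓞 K → ℝ, Summable H ∧ ∀ s ∈ Set.Ioc (1 : ℝ) 2, ∀ b,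
      |intWeight σ τ L s (r + b) - intWeight σ τ L s b| ≤ H b := by
  classical
  obtain ⟨C, hC, hle⟩ := h.exists_abs_intWeight_add_sub_le hL r
  let E : Finset (𝓞 K) := {0, -r}
  refine ⟨fun b ↦ C * max ‖σ b‖ ‖τ b‖ ^ (-3 : ℝ) + (if b ∈ E then L else 0),
    ((h.summable_max_norm_rpow (by norm_num)).mul_left C).add
      (summable_of_ne_finset_zero (s := E) fun b hb ↦ if_neg hb), fun s hs b ↦ ?_⟩
  have hs0 : 0 < s := by linarith [hs.1]
  by_cases hb : b ∈ E
  · simp only [if_pos hb]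
    exact le_add_of_nonneg_of_le (by positivity) <| abs_sub_le_of_nonneg_of_le
      (intWeight_nonneg _ _ _) (h.intWeight_le hL hs0 _)
      (intWeight_nonneg _ _ _) (h.intWeight_le hL hs0 _)
  · simp only [if_neg hb, add_zero]
    simp only [E, Finset.mem_insert, Finset.mem_singleton, not_or] at hb
    exact hle s hs b hb.1 fun hrb ↦ hb.2 (eq_neg_of_add_eq_zero_right hrb)

lemma exists_abs_tsum_intWeight_sub_le (hL : 0 ≤ L) {J : Ideal (𝓞 K)} (hJ : J ≠ 0) :
    ∃ B : ℝ, ∀ s ∈ Set.Ioc (1 : ℝ) 2,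
      |∑' a, intWeight σ τ L s a - Ideal.absNorm J * ∑' b : J, intWeight σ τ L s b| ≤ B := by
  choose H hH hle using h.exists_summable_abs_intWeight_add_sub_le hL
  have : Finite (𝓞 K ⧸ J.toAddSubgroup) := Ideal.finiteQuotientOfFreeOfNeBot J hJ
  have : J.toAddSubgroup.FiniteIndex := AddSubgroup.finiteIndex_of_finite_quotient
  exact ⟨_, fun s hs ↦ abs_tsum_sub_index_mul_tsum_le J.toAddSubgroup
    (h.summable_intWeight hL hs.1) hH fun r ↦ hle r s hs⟩

end IsEmbeddingPair

end IntWeight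

section IdealsInClass

variable {R : Type*} [CommRing R] [IsDedekindDomain R]

/-- The nonzero integral ideals in the ideal class `C`. -/
abbrev IdealsInClass (C : ClassGroup R) : Type _ :=
  {I : nonZeroDivisors (Ideal R) // ClassGroup.mk0 I = C}

lemma exists_span_singleton_eq_mul {J I : nonZeroDivisors (Ideal R)}
    (h : ClassGroup.mk0 J * ClassGroup.mk0 I = 1) :
    ∃ a : R, a ≠ 0 ∧ Ideal.span {a} = (J : Ideal R) * I := by
  rw [← map_mul] at h
  obtain ⟨a, ha⟩ := ((ClassGroup.mk0_eq_one_iff (SetLike.coe_mem (J * I))).1 h).principal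
  refine ⟨a, fun h0 ↦ nonZeroDivisors.coe_ne_zero (J * I) ?_, ha.symm⟩
  rw [ha, h0]
  exact Ideal.span_singleton_eq_bot.2 rfl

lemma exists_mul_eq_span_singleton {J : nonZeroDivisors (Ideal R)} {C : ClassGroup R}
    (hJC : ClassGroup.mk0 J * C = 1) {b : R} (hb : b ∈ (J : Ideal R)) (hb0 : b ≠ 0) :
    ∃ I : IdealsInClass C, (J : Ideal R) * I.1 = Ideal.span {b} := by
  obtain ⟨I, hI⟩ := Ideal.dvd_iff_le.2 ((Ideal.span_singleton_le_iff_mem _).2 hb)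
  have hI0 : I ≠ 0 := fun h0 ↦
    hb0 (Ideal.span_singleton_eq_bot.1 (hI.trans (by rw [h0, mul_zero, Ideal.zero_eq_bot])))
  lift I to nonZeroDivisors (Ideal R) using mem_nonZeroDivisors_of_ne_zero hI0
  have hmk : ClassGroup.mk0 (J * I) = 1 :=
    (ClassGroup.mk0_eq_one_iff (SetLike.coe_mem (J * I))).2 ⟨⟨b, hI.symm⟩⟩
  rw [map_mul] at hmk
  exact ⟨⟨I, mul_left_cancel (hmk.trans hJC.symm)⟩, hI.symm⟩

variable {J : nonZeroDivisors (Ideal R)} {C : ClassGroup R} {gen : IdealsInClass C → R}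

lemma span_unit_mul_eq (hgen : ∀ I, Ideal.span {gen I} = (J : Ideal R) * I.1)
    (p : IdealsInClass C × Rˣ) :
    Ideal.span {(p.2 : R) * gen p.1} = (J : Ideal R) * p.1.1 := by
  rw [Ideal.span_singleton_mul_left_unit p.2.isUnit, hgen]

lemma injective_unit_mul (hgen : ∀ I, Ideal.span {gen I} = (J : Ideal R) * I.1)
    (hgen0 : ∀ I, gen I ≠ 0) :
    Function.Injective fun p : IdealsInClass C × Rˣ ↦ (p.2 : R) * gen p.1 := by
  intro p q hpq
  dsimp only at hpq
  have hideal : (J : Ideal R) * p.1.1 = J * q.1.1 := by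
    rw [← span_unit_mul_eq hgen p, hpq, span_unit_mul_eq hgen q]
  have h1 : p.1 = q.1 :=
    Subtype.ext (Subtype.ext (mul_left_cancel₀ (nonZeroDivisors.coe_ne_zero J) hideal))
  rw [h1] at hpq
  exact Prod.ext h1 (Units.ext (mul_right_cancel₀ (hgen0 _) hpq))

lemma exists_unit_mul_eq (hgen : ∀ I, Ideal.span {gen I} = (J : Ideal R) * I.1)
    (hJC : ClassGroup.mk0 J * C = 1) {b : R} (hb : b ∈ (J : Ideal R)) (hb0 : b ≠ 0) :
    ∃ p : IdealsInClass C × Rˣ, (p.2 : R) * gen p.1 = b := by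
  obtain ⟨I, hI⟩ := exists_mul_eq_span_singleton hJC hb hb0
  obtain ⟨u, hu⟩ := Ideal.span_singleton_eq_span_singleton.1 ((hgen I).trans hI)
  exact ⟨(I, u), (mul_comm _ _).trans hu⟩

lemma hasSum_unit_mul (hgen : ∀ I, Ideal.span {gen I} = (J : Ideal R) * I.1)
    (hgen0 : ∀ I, gen I ≠ 0) (hJC : ClassGroup.mk0 J * C = 1) {f : R → ℝ} (hf : Summable f)
    (hf0 : f 0 = 0) :
    HasSum (fun p : IdealsInClass C × Rˣ ↦ f (p.2 * gen p.1)) (∑' b : (J : Ideal R), f b) := by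
  have hmem (p : IdealsInClass C × Rˣ) : (p.2 : R) * gen p.1 ∈ (J : Ideal R) :=
    Ideal.mul_le_left (I := (J : Ideal R)) (J := p.1.1)
      ((span_unit_mul_eq hgen p).le (Ideal.mem_span_singleton_self _))
  have hJ : HasSum (((J : Ideal R) : Set R).indicator f) (∑' b : (J : Ideal R), f b) :=
    hasSum_subtype_iff_indicator.1 (hf.subtype _).hasSum
  refine (((injective_unit_mul hgen hgen0).hasSum_iff fun b hb ↦ ?_).2 hJ).congr_fun fun p ↦ ?_
  · by_cases hbJ : b ∈ (J : Ideal R)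
    · rw [Set.indicator_of_mem hbJ]
      by_contra hfb
      exact hb (exists_unit_mul_eq hgen hJC hbJ fun hb0 ↦ hfb (hb0 ▸ hf0))
    · exact Set.indicator_of_notMem hbJ _
  · exact (Set.indicator_of_mem (hmem p) f).symm

end IdealsInClass

section ClassZeta

variable {K : Type*} [Field K] [NumberField K]

lemma one_le_absNorm (J : nonZeroDivisors (Ideal (𝓞 K))) :
    1 ≤ (Ideal.absNorm (J : Ideal (𝓞 K)) : ℝ) :=
  Nat.one_le_cast.2 (Nat.one_le_iff_ne_zero.2 (Ideal.absNorm_ne_zero_of_nonZeroDivisors J))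

lemma absNorm_pos (J : nonZeroDivisors (Ideal (𝓞 K))) :
    0 < (Ideal.absNorm (J : Ideal (𝓞 K)) : ℝ) :=
  one_pos.trans_le (one_le_absNorm J)

/-- The partial zeta function `∑ N(I)⁻ˢ` of an ideal class, the sum being over the nonzero integral
ideals in the class. -/
noncomputable def classZeta (C : ClassGroup (𝓞 K)) (s : ℝ) : ℝ :=
  ∑' I : IdealsInClass C, (Ideal.absNorm (I.1 : Ideal (𝓞 K)) : ℝ) ^ (-s)

lemma classZeta_nonneg (C : ClassGroup (𝓞 K)) (s : ℝ) : 0 ≤ classZeta C s :=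
  tsum_nonneg fun _ ↦ by positivity

lemma abs_sub_le_of_abs_sub_mul_le {x z w n N B B₁ B₂ : ℝ} (hz : 0 ≤ z) (hn0 : 0 ≤ n)
    (hn1 : n ≤ 1) (hnN : 1 ≤ n * N) (h : |x - n * w| ≤ B) (h₁ : |x - z| ≤ B₁)
    (h₂ : |x - n * (n * z)| ≤ B₂) : |w - z| ≤ (max B₂ B₁ + B) * N := by
  have hN : 0 ≤ N := (pos_of_mul_pos_right (one_pos.trans_le hnN) hn0).le
  -- `n * z` lies between `n ^ 2 * z` and `z`
  have hmid : |x - n * z| ≤ max B₂ B₁ := by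
    have hle : n * z ≤ z := mul_le_of_le_one_left hz hn1
    have hle' : n * (n * z) ≤ n * z := by gcongr
    rw [abs_sub_comm] at h₁ h₂ ⊢
    exact (abs_le_max_abs_abs (by gcongr) (by gcongr)).trans (max_le_max h₂ h₁)
  calc |w - z| ≤ (n * N) * |w - z| := le_mul_of_one_le_left (abs_nonneg _) hnN
    _ = |(x - n * z) - (x - n * w)| * N := by
        rw [sub_sub_sub_cancel_left, ← mul_sub, abs_mul, abs_of_nonneg hn0]
        ring
    _ ≤ (max B₂ B₁ + B) * N := by
        gcongr
        exact (abs_sub _ _).trans (add_le_add hmid h)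

namespace IsEmbeddingPair

variable {σ τ : K →+* ℂ} (h : IsEmbeddingPair σ τ)
include h

lemma hasSum_absNorm_rpow {L c : ℝ} (hL : 0 < L) (hc : 0 < c)
    (htent : ∀ a : 𝓞 K, a ≠ 0 → HasSum (fun u : (𝓞 K)ˣ ↦
      tent L (Real.log ‖σ (u * a : 𝓞 K)‖ - Real.log ‖τ (u * a : 𝓞 K)‖)) c)
    (J : nonZeroDivisors (Ideal (𝓞 K))) {C : ClassGroup (𝓞 K)} (hJC : ClassGroup.mk0 J * C = 1)
    {s : ℝ} (hs : 1 < s) :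
    HasSum (fun I : IdealsInClass C ↦ (Ideal.absNorm (I.1 : Ideal (𝓞 K)) : ℝ) ^ (-s))
      (c⁻¹ * (Ideal.absNorm (J : Ideal (𝓞 K)) : ℝ) ^ s *
        ∑' b : (J : Ideal (𝓞 K)), intWeight σ τ L s b) := by
  choose gen hgen0 hgen using fun I : IdealsInClass C ↦
    exists_span_singleton_eq_mul (J := J) (I := I.1) (by rw [I.2, hJC])
  have hunits (I : IdealsInClass C) :
      HasSum (fun u : (𝓞 K)ˣ ↦ intWeight σ τ L s (u * gen I))
        (c * ((Ideal.absNorm (J : Ideal (𝓞 K)) : ℝ) ^ (-s) *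
          (Ideal.absNorm (I.1 : Ideal (𝓞 K)) : ℝ) ^ (-s))) := by
    refine ((htent (gen I) (hgen0 I)).mul_right _).congr_fun fun u ↦ ?_
    rw [intWeight, diagWeight, ← h.natAbs_norm_eq, ← Ideal.absNorm_span_singleton,
      span_unit_mul_eq hgen (I, u), map_mul, Nat.cast_mul,
      Real.mul_rpow (Nat.cast_nonneg _) (Nat.cast_nonneg _)]
  have htotal := hasSum_unit_mul hgen hgen0 hJC (h.summable_intWeight hL.le hs)
    (intWeight_zero L (by linarith))
  convert! (htotal.prod_fiberwise hunits).mul_left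
    (c⁻¹ * (Ideal.absNorm (J : Ideal (𝓞 K)) : ℝ) ^ s) using 2 with I
  have hJs : (Ideal.absNorm (J : Ideal (𝓞 K)) : ℝ) ^ s ≠ 0 :=
    (Real.rpow_pos_of_pos (absNorm_pos J) s).ne'
  rw [Real.rpow_neg (absNorm_pos J).le]
  field_simp

lemma summable_classZeta (C : ClassGroup (𝓞 K)) {s : ℝ} (hs : 1 < s) :
    Summable fun I : IdealsInClass C ↦ (Ideal.absNorm (I.1 : Ideal (𝓞 K)) : ℝ) ^ (-s) := by
  obtain ⟨L, hL, c, hc, htent⟩ := h.exists_hasSum_tent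
  obtain ⟨J, hJ⟩ := ClassGroup.mk0_surjective C⁻¹
  exact (h.hasSum_absNorm_rpow hL hc htent J (by rw [hJ, inv_mul_cancel]) hs).summable

lemma exists_abs_sub_rpow_mul_classZeta_le :
    ∃ F : ℝ → ℝ, ∀ (J : nonZeroDivisors (Ideal (𝓞 K))) (C : ClassGroup (𝓞 K)),
      ClassGroup.mk0 J * C = 1 → ∃ B : ℝ, ∀ s ∈ Set.Ioc (1 : ℝ) 2,
        |F s - (Ideal.absNorm (J : Ideal (𝓞 K)) : ℝ) ^ (1 - s) * classZeta C s| ≤ B := by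
  obtain ⟨L, hL, c, hc, htent⟩ := h.exists_hasSum_tent
  refine ⟨fun s ↦ c⁻¹ * ∑' a, intWeight σ τ L s a, fun J C hJC ↦ ?_⟩
  obtain ⟨B, hB⟩ := h.exists_abs_tsum_intWeight_sub_le hL.le (nonZeroDivisors.coe_ne_zero J)
  refine ⟨c⁻¹ * B, fun s hs ↦ ?_⟩
  have hNs : (Ideal.absNorm (J : Ideal (𝓞 K)) : ℝ) ^ (1 - s) *
      (Ideal.absNorm (J : Ideal (𝓞 K)) : ℝ) ^ s = Ideal.absNorm (J : Ideal (𝓞 K)) := by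
    rw [← Real.rpow_add (absNorm_pos J), sub_add_cancel, Real.rpow_one]
  have hzeta : (Ideal.absNorm (J : Ideal (𝓞 K)) : ℝ) ^ (1 - s) * classZeta C s = c⁻¹ *
      (Ideal.absNorm (J : Ideal (𝓞 K)) * ∑' b : (J : Ideal (𝓞 K)), intWeight σ τ L s b) := by
    rw [classZeta, (h.hasSum_absNorm_rpow hL hc htent J hJC hs.1).tsum_eq]
    linear_combination (c⁻¹ * ∑' b : (J : Ideal (𝓞 K)), intWeight σ τ L s b) * hNs
  rw [hzeta, ← mul_sub, abs_mul, abs_of_pos (inv_pos.2 hc)]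
  gcongr
  exact hB s hs

lemma exists_mk0_eq_one_absNorm_eq_sq {n : ℕ} (hn : n ≠ 0) :
    ∃ I : nonZeroDivisors (Ideal (𝓞 K)),
      ClassGroup.mk0 I = 1 ∧ Ideal.absNorm (I : Ideal (𝓞 K)) = n ^ 2 := by
  have hmem : Ideal.span {(n : 𝓞 K)} ∈ nonZeroDivisors (Ideal (𝓞 K)) :=
    mem_nonZeroDivisors_of_ne_zero (Ideal.span_singleton_eq_bot.not.2 (Nat.cast_ne_zero.2 hn))
  refine ⟨⟨_, hmem⟩, (ClassGroup.mk0_eq_one_iff hmem).2 ⟨⟨_, rfl⟩⟩, ?_⟩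
  rw [Ideal.absNorm_span_natCast, RingOfIntegers.rank, h.finrank_eq_two]

lemma exists_abs_classZeta_sub_le (C : ClassGroup (𝓞 K)) :
    ∃ B : ℝ, ∀ s ∈ Set.Ioc (1 : ℝ) 2, |classZeta C s - classZeta (1 : ClassGroup (𝓞 K)) s| ≤ B := by
  obtain ⟨J, hJ⟩ := ClassGroup.mk0_surjective C⁻¹
  obtain ⟨J', hJ', hN'⟩ :=
    h.exists_mk0_eq_one_absNorm_eq_sq (Ideal.absNorm_ne_zero_of_nonZeroDivisors J)
  obtain ⟨F, hF⟩ := h.exists_abs_sub_rpow_mul_classZeta_le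
  obtain ⟨B, hB⟩ := hF J C (by rw [hJ, inv_mul_cancel])
  obtain ⟨B₁, hB₁⟩ := hF 1 1 (by rw [map_one, mul_one])
  obtain ⟨B₂, hB₂⟩ := hF J' 1 (by rw [hJ', mul_one])
  set N := (Ideal.absNorm (J : Ideal (𝓞 K)) : ℝ) with hN
  have hN1 : 1 ≤ N := one_le_absNorm J
  refine ⟨(max B₂ B₁ + B) * N, fun s hs ↦ ?_⟩
  set n : ℝ := N ^ (1 - s) with hn
  have hn0 : 0 ≤ n := by positivity
  have hn1 : n ≤ 1 := Real.rpow_le_one_of_one_le_of_nonpos hN1 (by linarith [hs.1])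
  have hnN : 1 ≤ n * N := by
    rw [hn, ← Real.rpow_add_one (by positivity)]
    exact Real.one_le_rpow hN1 (by linarith [hs.2])
  have h₁ : |F s - classZeta (1 : ClassGroup (𝓞 K)) s| ≤ B₁ := by simpa using hB₁ s hs
  have h₂ : |F s - n * (n * classZeta (1 : ClassGroup (𝓞 K)) s)| ≤ B₂ := by
    have := hB₂ s hs
    rwa [hN', Nat.cast_pow, ← hN, sq, Real.mul_rpow (by positivity) (by positivity),
      mul_assoc] at this
  exact abs_sub_le_of_abs_sub_mul_le (classZeta_nonneg _ s) hn0 hn1 hnN (hB s hs) h₁ h₂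

lemma exists_forall_abs_classZeta_sub_le :
    ∃ B : ℝ, ∀ C : ClassGroup (𝓞 K), ∀ s ∈ Set.Ioc (1 : ℝ) 2,
      |classZeta C s - classZeta (1 : ClassGroup (𝓞 K)) s| ≤ B := by
  choose B hB using h.exists_abs_classZeta_sub_le
  obtain ⟨M, hM⟩ := (Set.finite_range B).bddAbove
  exact ⟨M, fun C s hs ↦ (hB C s hs).trans (hM (Set.mem_range_self C))⟩

lemma summable_absNorm_rpow {s : ℝ} (hs : 1 < s) :
    Summable fun I : nonZeroDivisors (Ideal (𝓞 K)) ↦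
      (Ideal.absNorm (I : Ideal (𝓞 K)) : ℝ) ^ (-s) := by
  rw [← (Equiv.sigmaFiberEquiv ClassGroup.mk0).summable_iff]
  exact (summable_sigma_of_nonneg fun _ ↦ Real.rpow_nonneg (Nat.cast_nonneg _) _).2
    ⟨fun C ↦ h.summable_classZeta C hs, (hasSum_fintype _).summable⟩

end IsEmbeddingPair

end ClassZeta

section ClassCharacter

/-- The nonzero prime ideals of a Dedekind domain. -/
abbrev PrimeIdeal (R : Type*) [CommRing R] : Type _ := {P : Ideal R // Prime P}

namespace PrimeIdeal

variable {R : Type*} [CommRing R] [IsDedekindDomain R]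

/-- A nonzero prime ideal, as an argument for `ClassGroup.mk0`. -/
def toNonZeroDivisors (P : PrimeIdeal R) : nonZeroDivisors (Ideal R) :=
  ⟨P.1, mem_nonZeroDivisors_of_ne_zero P.2.ne_zero⟩

lemma toNonZeroDivisors_injective :
    Function.Injective (toNonZeroDivisors : PrimeIdeal R → nonZeroDivisors (Ideal R)) :=
  fun _ _ h ↦ Subtype.ext (congr_arg (fun I : nonZeroDivisors (Ideal R) ↦ (I : Ideal R)) h)

/-- The ideal class of a nonzero prime ideal. -/
noncomputable def idealClass (P : PrimeIdeal R) : ClassGroup R :=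
  ClassGroup.mk0 P.toNonZeroDivisors

end PrimeIdeal

section

variable {R : Type*} [CommRing R] [IsDedekindDomain R]

lemma mk0_mk_one (h : (1 : Ideal R) ∈ nonZeroDivisors (Ideal R)) :
    ClassGroup.mk0 ⟨1, h⟩ = 1 :=
  map_one ClassGroup.mk0

lemma mk0_mk_mul {I J : Ideal R} (hI : I ≠ 0) (hJ : J ≠ 0) :
    ClassGroup.mk0 ⟨I * J, mem_nonZeroDivisors_of_ne_zero (mul_ne_zero hI hJ)⟩ =
      ClassGroup.mk0 ⟨I, mem_nonZeroDivisors_of_ne_zero hI⟩ *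
        ClassGroup.mk0 ⟨J, mem_nonZeroDivisors_of_ne_zero hJ⟩ := by
  rw [← map_mul]
  exact congr_arg _ (Subtype.ext rfl)

end

variable {K : Type*} [Field K] [NumberField K]

open scoped Classical in
/-- The completely multiplicative function `I ↦ ψ([I]) N(I)⁻ˢ` on ideals, whose sum is the
`L`-series of the class group character `ψ`. -/
noncomputable def classCharRpow (ψ : AddChar (Additive (ClassGroup (𝓞 K))) ℂ) (s : ℝ) :
    Ideal (𝓞 K) →*₀ ℂ where
  toFun I := if h : I = 0 then 0 else
    ψ (Additive.ofMul (ClassGroup.mk0 ⟨I, mem_nonZeroDivisors_of_ne_zero h⟩)) *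
      ((Ideal.absNorm I : ℝ) ^ (-s) : ℝ)
  map_zero' := dif_pos rfl
  map_one' := by
    rw [dif_neg one_ne_zero, mk0_mk_one, ofMul_one, AddChar.map_zero_eq_one, one_mul,
      map_one Ideal.absNorm, Nat.cast_one, Real.one_rpow, Complex.ofReal_one]
  map_mul' I J := by
    by_cases hI : I = 0
    · rw [dif_pos hI, zero_mul, dif_pos (by rw [hI, zero_mul])]
    by_cases hJ : J = 0
    · rw [dif_pos hJ, mul_zero, dif_pos (by rw [hJ, mul_zero])]
    rw [dif_neg (mul_ne_zero hI hJ), dif_neg hI, dif_neg hJ, mk0_mk_mul hI hJ,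
      map_mul Ideal.absNorm, Nat.cast_mul,
      Real.mul_rpow (Nat.cast_nonneg _) (Nat.cast_nonneg _), ofMul_mul,
      AddChar.map_add_eq_mul, Complex.ofReal_mul]
    ring

variable (ψ : AddChar (Additive (ClassGroup (𝓞 K))) ℂ)

lemma classCharRpow_apply (s : ℝ) (I : nonZeroDivisors (Ideal (𝓞 K))) :
    classCharRpow ψ s (I : Ideal (𝓞 K)) = ψ (Additive.ofMul (ClassGroup.mk0 I)) *
      ((Ideal.absNorm (I : Ideal (𝓞 K)) : ℝ) ^ (-s) : ℝ) :=
  dif_neg (nonZeroDivisors.coe_ne_zero I)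

lemma norm_classCharRpow (s : ℝ) (I : nonZeroDivisors (Ideal (𝓞 K))) :
    ‖classCharRpow ψ s (I : Ideal (𝓞 K))‖ = (Ideal.absNorm (I : Ideal (𝓞 K)) : ℝ) ^ (-s) := by
  rw [classCharRpow_apply, norm_mul, AddChar.norm_apply, one_mul,
    Complex.norm_of_nonneg (by positivity)]

lemma re_classCharRpow_primeIdeal (s : ℝ) (P : PrimeIdeal (𝓞 K)) :
    (classCharRpow ψ s P.1).re =
      (ψ (Additive.ofMul P.idealClass)).re * (Ideal.absNorm P.1 : ℝ) ^ (-s) :=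
  (congr_arg Complex.re (classCharRpow_apply ψ s P.toNonZeroDivisors)).trans
    (Complex.re_mul_ofReal _ _)

lemma norm_classCharRpow_primeIdeal_sq_le {s : ℝ} (hs : 1 < s) (P : PrimeIdeal (𝓞 K)) :
    ‖classCharRpow ψ s P.1‖ ^ 2 ≤ (Ideal.absNorm P.1 : ℝ) ^ (-2 : ℝ) := by
  have hnorm : ‖classCharRpow ψ s P.1‖ = (Ideal.absNorm P.1 : ℝ) ^ (-s) :=
    norm_classCharRpow ψ s P.toNonZeroDivisors
  rw [hnorm, ← Real.rpow_mul_natCast (Nat.cast_nonneg _)]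
  exact Real.rpow_le_rpow_of_exponent_le (one_le_absNorm P.toNonZeroDivisors)
    (by push_cast; linarith)

lemma support_classCharRpow_subset (s : ℝ) :
    Function.support (classCharRpow ψ s) ⊆
      Set.range (Subtype.val : nonZeroDivisors (Ideal (𝓞 K)) → Ideal (𝓞 K)) := fun I hI ↦
  ⟨⟨I, mem_nonZeroDivisors_of_ne_zero fun h0 ↦ hI (h0 ▸ map_zero _)⟩, rfl⟩

namespace IsEmbeddingPair

variable {σ τ : K →+* ℂ} (h : IsEmbeddingPair σ τ)
include h

lemma summable_norm_classCharRpow {s : ℝ} (hs : 1 < s) :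
    Summable fun I ↦ ‖classCharRpow ψ s I‖ := by
  refine (Subtype.val_injective.summable_iff
    (g := (Subtype.val : nonZeroDivisors (Ideal (𝓞 K)) → Ideal (𝓞 K))) fun I hI ↦ ?_).1
    ((h.summable_absNorm_rpow hs).congr fun I ↦ (norm_classCharRpow ψ s I).symm)
  rw [Function.notMem_support.1 fun hI' ↦ hI (support_classCharRpow_subset ψ s hI'), norm_zero]

lemma tsum_classCharRpow {s : ℝ} (hs : 1 < s) :
    ∑' I, classCharRpow ψ s I =
      ∑ C : ClassGroup (𝓞 K), ψ (Additive.ofMul C) * (classZeta C s : ℂ) := by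
  have hsum : Summable fun I : nonZeroDivisors (Ideal (𝓞 K)) ↦
      classCharRpow ψ s (I : Ideal (𝓞 K)) :=
    (h.summable_norm_classCharRpow ψ hs).of_norm.comp_injective Subtype.val_injective
  have hfiber (C : ClassGroup (𝓞 K)) : ∑' I : IdealsInClass C, classCharRpow ψ s I.1 =
      ψ (Additive.ofMul C) * (classZeta C s : ℂ) := by
    rw [classZeta, Complex.ofReal_tsum, ← tsum_mul_left]
    refine tsum_congr fun I ↦ ?_
    rw [classCharRpow_apply, I.2]
  rw [← Subtype.val_injective.tsum_eq (support_classCharRpow_subset ψ s),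
    ← Finset.sum_congr rfl fun C _ ↦ hfiber C]
  exact (hsum.hasSum.tsum_fiberwise ClassGroup.mk0).unique (hasSum_fintype _)

-- `∑ ψ(C) = 0` cancels the common singularity of the partial zeta functions at `s = 1`.
lemma exists_norm_tsum_classCharRpow_le :
    ∃ B : ℝ, ∀ ψ : AddChar (Additive (ClassGroup (𝓞 K))) ℂ, ψ ≠ 0 → ∀ s ∈ Set.Ioc (1 : ℝ) 2,
      ‖∑' I, classCharRpow ψ s I‖ ≤ B := by
  obtain ⟨B, hB⟩ := h.exists_forall_abs_classZeta_sub_le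
  refine ⟨∑ _C : ClassGroup (𝓞 K), B, fun ψ hψ s hs ↦ ?_⟩
  have hψsum : ∑ C : ClassGroup (𝓞 K), ψ (Additive.ofMul C) = 0 :=
    (Additive.ofMul.sum_comp ψ).trans (AddChar.sum_eq_zero_iff_ne_zero.2 hψ)
  have hsub : ∑ C : ClassGroup (𝓞 K), ψ (Additive.ofMul C) * (classZeta C s : ℂ) =
      ∑ C : ClassGroup (𝓞 K), ψ (Additive.ofMul C) *
        ((classZeta C s - classZeta (1 : ClassGroup (𝓞 K)) s : ℝ) : ℂ) := by
    simp_rw [Complex.ofReal_sub, mul_sub, Finset.sum_sub_distrib]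
    rw [← Finset.sum_mul, hψsum, zero_mul, sub_zero]
  rw [h.tsum_classCharRpow ψ hs.1, hsub]
  refine (norm_sum_le _ _).trans (Finset.sum_le_sum fun C _ ↦ ?_)
  rw [norm_mul, AddChar.norm_apply, one_mul, Complex.norm_real]
  exact hB C s hs

lemma summable_primeIdeal_absNorm_rpow {s : ℝ} (hs : 1 < s) :
    Summable fun P : PrimeIdeal (𝓞 K) ↦ (Ideal.absNorm P.1 : ℝ) ^ (-s) :=
  ((h.summable_absNorm_rpow hs).comp_injective PrimeIdeal.toNonZeroDivisors_injective).congr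
    fun _ ↦ rfl

lemma exists_tsum_primeIdeal_re_le :
    ∃ B : ℝ, ∀ ψ : AddChar (Additive (ClassGroup (𝓞 K))) ℂ, ψ ≠ 0 → ∀ s ∈ Set.Ioc (1 : ℝ) 2,
      ∑' P : PrimeIdeal (𝓞 K),
        (ψ (Additive.ofMul P.idealClass)).re * (Ideal.absNorm P.1 : ℝ) ^ (-s) ≤ B := by
  obtain ⟨B, hB⟩ := h.exists_norm_tsum_classCharRpow_le
  have hsum := h.summable_primeIdeal_absNorm_rpow one_lt_two
  refine ⟨Real.log B + (∑' P : PrimeIdeal (𝓞 K), (Ideal.absNorm P.1 : ℝ) ^ (-2 : ℝ)) / 2,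
    fun ψ hψ s hs ↦ ?_⟩
  have hle := norm_classCharRpow_primeIdeal_sq_le ψ hs.1
  have hsq : Summable fun P : PrimeIdeal (𝓞 K) ↦ ‖classCharRpow ψ s P.1‖ ^ 2 :=
    .of_nonneg_of_le (fun _ ↦ sq_nonneg _) hle hsum
  have hlog := tsum_re_le_log_norm_tsum (classCharRpow ψ s)
    (h.summable_norm_classCharRpow ψ hs.1) hsq (hB ψ hψ s hs)
  simp_rw [re_classCharRpow_primeIdeal] at hlog
  linarith [hsq.tsum_le_tsum hle hsum]

end IsEmbeddingPair

end ClassCharacter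

section PrincipalPrimes

-- The weights `1 - Re ψ(h)` are nonnegative and vanish at the trivial character, so weighting the
-- upper bounds for the nontrivial characters by them isolates the trivial class.
open scoped Classical in
lemma sum_one_sub_re_mul_re {G : Type*} [CommGroup G] [Fintype G] {h c : G} (hch : c ≠ h)
    (hch' : c ≠ h⁻¹) :
    ∑ ψ : AddChar (Additive G) ℂ, (1 - (ψ (Additive.ofMul h)).re) * (ψ (Additive.ofMul c)).re =
      if c = 1 then (Fintype.card G : ℝ) else 0 := by
  have hre (x : G) : ∑ ψ : AddChar (Additive G) ℂ, (ψ (Additive.ofMul x)).re =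
      if x = 1 then (Fintype.card G : ℝ) else 0 := by
    have hsum := congr_arg Complex.re (AddChar.sum_apply_eq_ite (Additive.ofMul x))
    rw [Complex.re_sum] at hsum
    rw [hsum]
    by_cases hx : x = 1 <;> simp [hx]
  have hprod (ψ : AddChar (Additive G) ℂ) :
      (1 - (ψ (Additive.ofMul h)).re) * (ψ (Additive.ofMul c)).re =
      (ψ (Additive.ofMul c)).re -
        ((ψ (Additive.ofMul (c * h))).re + (ψ (Additive.ofMul (c * h⁻¹))).re) / 2 := by
    rw [ofMul_mul, ofMul_mul, ofMul_inv, AddChar.map_add_eq_mul, AddChar.map_add_eq_mul,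
      AddChar.map_neg_eq_conj, Complex.mul_re, Complex.mul_re, Complex.conj_re, Complex.conj_im]
    ring
  simp_rw [hprod, Finset.sum_sub_distrib, ← Finset.sum_div, Finset.sum_add_distrib, hre]
  rw [if_neg (mt eq_inv_of_mul_eq_one_left hch'), if_neg (mt mul_inv_eq_one.1 hch), add_zero,
    zero_div, sub_zero]

lemma summable_inv_of_forall_sum_rpow_le {ι : Type*} {a : ι → ℝ} (ha : ∀ i, 0 < a i) {B : ℝ}
    (hB : ∀ s ∈ Set.Ioc (1 : ℝ) 2, ∀ S : Finset ι, ∑ i ∈ S, a i ^ (-s) ≤ B) :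
    Summable fun i ↦ (a i)⁻¹ := by
  refine summable_of_sum_le (c := B) (fun i ↦ (inv_pos.2 (ha i)).le) fun S ↦ ?_
  have hcont : Continuous fun s : ℝ ↦ ∑ i ∈ S, a i ^ (-s) :=
    continuous_finsetSum _ fun i _ ↦ (Real.continuous_const_rpow (ha i).ne').comp continuous_neg
  have hlim := (hcont.tendsto 1).mono_left (nhdsWithin_le_nhds (s := Set.Ioi 1))
  simp only [Real.rpow_neg_one] at hlim
  exact le_of_tendsto hlim
    (Filter.eventually_of_mem (Ioc_mem_nhdsGT one_lt_two) fun s hs ↦ hB s hs S)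

variable {K : Type*} [Field K] [NumberField K]

namespace IsEmbeddingPair

variable {σ τ : K →+* ℂ} (h : IsEmbeddingPair σ τ)
include h

lemma summable_re_mul_absNorm_rpow (ψ : AddChar (Additive (ClassGroup (𝓞 K))) ℂ) {s : ℝ}
    (hs : 1 < s) :
    Summable fun P : PrimeIdeal (𝓞 K) ↦
      (ψ (Additive.ofMul P.idealClass)).re * (Ideal.absNorm P.1 : ℝ) ^ (-s) := by
  refine .of_norm_bounded (h.summable_primeIdeal_absNorm_rpow hs) fun P ↦ ?_
  rw [norm_mul, Real.norm_of_nonneg (r := (_ : ℝ) ^ (-s)) (by positivity)]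
  exact mul_le_of_le_one_left (by positivity)
    ((Complex.abs_re_le_norm _).trans (AddChar.norm_apply _ _).le)

lemma exists_tsum_principal_prime_le {g : ClassGroup (𝓞 K)}
    (hg : ∀ P : PrimeIdeal (𝓞 K), P.idealClass ≠ g ∧ P.idealClass ≠ g⁻¹) :
    ∃ B : ℝ, ∀ s ∈ Set.Ioc (1 : ℝ) 2,
      ∑' P : {P : PrimeIdeal (𝓞 K) // P.idealClass = 1}, (Ideal.absNorm P.1.1 : ℝ) ^ (-s) ≤ B := by
  classical
  obtain ⟨B, hB⟩ := h.exists_tsum_primeIdeal_re_le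
  let w (ψ : AddChar (Additive (ClassGroup (𝓞 K))) ℂ) : ℝ := 1 - (ψ (Additive.ofMul g)).re
  let n : ℝ := Fintype.card (ClassGroup (𝓞 K))
  have hn : 0 < n := Nat.cast_pos.2 Fintype.card_pos
  refine ⟨(∑ ψ, w ψ * B) / n, fun s hs ↦ ?_⟩
  have horth (P : PrimeIdeal (𝓞 K)) :
      n * {P : PrimeIdeal (𝓞 K) | P.idealClass = 1}.indicator
        (fun P ↦ (Ideal.absNorm P.1 : ℝ) ^ (-s)) P =
      ∑ ψ, w ψ * ((ψ (Additive.ofMul P.idealClass)).re * (Ideal.absNorm P.1 : ℝ) ^ (-s)) := by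
    simp_rw [← mul_assoc]
    rw [← Finset.sum_mul, sum_one_sub_re_mul_re (hg P).1 (hg P).2, Set.indicator_apply, mul_ite,
      ite_mul, mul_zero, zero_mul]
    rfl
  refine (tsum_subtype {P : PrimeIdeal (𝓞 K) | P.idealClass = 1} fun P ↦
    (Ideal.absNorm P.1 : ℝ) ^ (-s)).trans_le ?_
  rw [le_div_iff₀ hn, mul_comm, ← tsum_mul_left, tsum_congr horth,
    Summable.tsum_finsetSum fun ψ _ ↦ (h.summable_re_mul_absNorm_rpow ψ hs.1).mul_left _]
  refine Finset.sum_le_sum fun ψ _ ↦ ?_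
  rw [tsum_mul_left]
  by_cases hψ : ψ = 0
  · simp [hψ, w]
  · exact mul_le_mul_of_nonneg_left (hB ψ hψ s hs)
      (sub_nonneg.2 ((Complex.re_le_norm _).trans (AddChar.norm_apply _ _).le))

lemma summable_principal_prime_absNorm_inv {g : ClassGroup (𝓞 K)}
    (hg : ∀ P : PrimeIdeal (𝓞 K), P.idealClass ≠ g ∧ P.idealClass ≠ g⁻¹) :
    Summable fun P : {P : PrimeIdeal (𝓞 K) // P.idealClass = 1} ↦
      (Ideal.absNorm P.1.1 : ℝ)⁻¹ := by
  obtain ⟨B, hB⟩ := h.exists_tsum_principal_prime_le hg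
  refine summable_inv_of_forall_sum_rpow_le (fun P ↦ absNorm_pos P.1.toNonZeroDivisors) (B := B)
    fun s hs S ↦ ?_
  have hsum : Summable fun P : {P : PrimeIdeal (𝓞 K) // P.idealClass = 1} ↦
      (Ideal.absNorm P.1.1 : ℝ) ^ (-s) :=
    (h.summable_primeIdeal_absNorm_rpow hs.1).comp_injective Subtype.val_injective
  exact (hsum.sum_le_tsum S fun _ _ ↦ by positivity).trans (hB s hs)

end IsEmbeddingPair

lemma not_summable_principal_prime_absNorm_inv {q : ℕ} (hq : q ≠ 0)
    (hnorm : ∀ p : ℕ, p.Prime → (p : ZMod q) = 1 → ∃ c : 𝓞 K, (Algebra.norm ℤ c).natAbs = p) :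
    ¬ Summable fun P : {P : PrimeIdeal (𝓞 K) // P.idealClass = 1} ↦
      (Ideal.absNorm P.1.1 : ℝ)⁻¹ := by
  have : NeZero q := ⟨hq⟩
  intro hsum
  choose! c hc using hnorm
  have hspan (p : {p : ℕ | p.Prime ∧ (p : ZMod q) = 1}) :
      Ideal.absNorm (Ideal.span {c p}) = p := by
    rw [Ideal.absNorm_span_singleton, hc p p.2.1 p.2.2]
  have hprime (p : {p : ℕ | p.Prime ∧ (p : ZMod q) = 1}) : Prime (Ideal.span {c p}) :=
    (Ideal.irreducible_of_irreducible_absNorm (by rw [hspan p]; exact p.2.1)).prime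
  let P (p : {p : ℕ | p.Prime ∧ (p : ZMod q) = 1}) : PrimeIdeal (𝓞 K) := ⟨_, hprime p⟩
  have hP (p) : (P p).idealClass = 1 :=
    (ClassGroup.mk0_eq_one_iff (P p).toNonZeroDivisors.2).2 ⟨⟨c p, rfl⟩⟩
  have hinj : Function.Injective fun p ↦
      (⟨P p, hP p⟩ : {P : PrimeIdeal (𝓞 K) // P.idealClass = 1}) := fun p p' hpp' ↦ by
    have habs := congr_arg (fun Q ↦ Ideal.absNorm Q.1.1) hpp'
    exact Subtype.ext ((hspan p).symm.trans (habs.trans (hspan p')))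
  refine not_summable_indicator_prime_residueClass_inv (q := q) isUnit_one
    (summable_subtype_iff_indicator.1 ((hsum.comp_injective hinj).congr fun p ↦ ?_))
  exact congr_arg (fun n : ℕ ↦ (n : ℝ)⁻¹) (hspan p)

end PrincipalPrimes

/-- let `K` be a quadratic number field whose ring of integers is
nonfactorial. If the image of the absolute norm `N` is closed under division,
then every element of the class group squares to the identity (equivalently,
the class group is a finite product of copies of `ℤ/2ℤ`). -/
theorem stmt_12 (K : Type*) [Field K] [NumberField K]
    (hdeg : Module.finrank ℚ K = 2)
    (hnf : Nontrivial (ClassGroup (𝓞 K)))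
    (hdiv : ∀ a b : 𝓞 K, a ≠ 0 → b ≠ 0 →
      (Algebra.norm ℤ a).natAbs ∣ (Algebra.norm ℤ b).natAbs →
      ∃ c : 𝓞 K,
        (Algebra.norm ℤ a).natAbs * (Algebra.norm ℤ c).natAbs =
          (Algebra.norm ℤ b).natAbs) :
    ∀ g : ClassGroup (𝓞 K), g ^ 2 = 1 := by
  obtain ⟨σ, τ, h⟩ := exists_isEmbeddingPair hdeg
  have hN : NormClosedUnderDivision K := hdiv
  intro g
  by_contra hg
  have hclass (P : PrimeIdeal (𝓞 K)) : P.idealClass ≠ g ^ 2 ∧ P.idealClass ≠ (g ^ 2)⁻¹ := by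
    refine ⟨fun hP ↦ hg ?_, fun hP ↦ hg ?_⟩
    · exact hP.symm.trans (hN.mk0_eq_one_of_prime_of_eq_sq h P.2 hP)
    · rw [← inv_eq_one, ← hP]
      exact hN.mk0_eq_one_of_prime_of_eq_sq h P.2 (g := g⁻¹) (hP.trans (inv_pow g 2).symm)
  obtain ⟨q, hq, hnorm⟩ := hN.exists_prime_norms h
  exact not_summable_principal_prime_absNorm_inv hq hnorm
    (h.summable_principal_prime_absNorm_inv hclass)
end
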